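/- Let h, d, m ∈ ℕ with d ≥ 2 and m ≥ 2, and let G := G_{h,d,m}. If P and Q are paths in G each having one endvertex in S(G) and one endvertex in T(G), then either one of P, Q contains the root R(G), or d_G(V(P), V(Q)) ≤ 2. -/

import Mathlib

open SimpleGraph

namespace CGT

/-- Distance between two vertex sets, as an extended natural number. -/
noncomputable def sDist {V : Type*} (G : SimpleGraph V) (U U' : Set V) : ℕ∞ :=
  ⨅ (u : U) (v : U'), G.edist u.1 v.1

/-- The ball of radius `r` around a vertex set `U`. -/
def gBall {V : Type*} (G : SimpleGraph V) (U : Set V) (r : ℕ) : Set V :=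
  {v | ∃ u ∈ U, G.edist u v ≤ (r : ℕ∞)}

/-- A set of vertices is connected if the induced subgraph is connected. -/
def SetConn {V : Type*} (G : SimpleGraph V) (U : Set V) : Prop :=
  (G.induce U).Connected

/-- The vertex set of a walk. -/
def walkSupp {V : Type*} {G : SimpleGraph V} {a b : V} (p : G.Walk a b) : Set V :=
  {v | v ∈ p.support}

/-- `X` separates `Y` and `Z` in `G`: every path with one end in `Y` and one in `Z`
contains a vertex of `X`. -/
def Separates {V : Type*} (G : SimpleGraph V) (X Y Z : Set V) : Prop :=
  ∀ ⦃y z : V⦄, y ∈ Y → z ∈ Z → ∀ p : G.Walk y z, p.IsPath → ∃ x ∈ X, x ∈ p.support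

/-- `f` is an `(M,A)`-quasi-isometry from `G` to `H`.  The two-sided distance bound
`M⁻¹ d_G(u,v) - A ≤ d_H(f u, f v) ≤ M d_G(u,v) + A` is stated multiplied out over `ℕ∞`. -/
structure IsQI {V V' : Type*} (M A : ℕ) (G : SimpleGraph V) (H : SimpleGraph V')
    (f : V → V') : Prop where
  upper : ∀ u v : V, H.edist (f u) (f v) ≤ (M : ℕ∞) * G.edist u v + (A : ℕ∞)
  lower : ∀ u v : V, G.edist u v ≤ (M : ℕ∞) * H.edist (f u) (f v) + (M : ℕ∞) * (A : ℕ∞)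
  dense : ∀ w : V', ∃ v : V, H.edist w (f v) ≤ (A : ℕ∞)

/-- `G` is `(M,A)`-quasi-isometric to `H`. -/
def QIsometric {V V' : Type*} (M A : ℕ) (G : SimpleGraph V) (H : SimpleGraph V') : Prop :=
  ∃ f : V → V', IsQI M A G H f

/-- `X` is a minor of `G`. -/
def HasMinor {V W : Type*} (G : SimpleGraph V) (X : SimpleGraph W) : Prop :=
  ∃ U : W → Set V,
    (∀ x, (U x).Nonempty) ∧ (∀ x, SetConn G (U x)) ∧
    (∀ ⦃x y⦄, x ≠ y → Disjoint (U x) (U y)) ∧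
    ∀ ⦃x y⦄, X.Adj x y → ∃ u ∈ U x, ∃ v ∈ U y, G.Adj u v

/-- The `(a × b)`-grid graph. -/
def gridGraph (a b : ℕ) : SimpleGraph (Fin a × Fin b) :=
  SimpleGraph.fromRel (fun u v =>
    (u.1 = v.1 ∧ u.2.1 + 1 = v.2.1) ∨ (u.2 = v.2 ∧ u.1.1 + 1 = v.1.1))

/-- A `K`-fat model of `X` in `G`: disjoint connected branch sets joined by internally
disjoint branch paths, all pairwise at distance at least `K` except for a branch path and
the branch sets of its endpoints. -/
structure FatModel {V W : Type*} (G : SimpleGraph V) (X : SimpleGraph W) (K : ℕ) where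
  branch : W → Set V
  branch_nonempty : ∀ x, (branch x).Nonempty
  branch_connected : ∀ x, SetConn G (branch x)
  branch_disjoint : ∀ ⦃x y⦄, x ≠ y → Disjoint (branch x) (branch y)
  pathEnd : ∀ ⦃x y⦄, X.Adj x y → V
  path : ∀ ⦃x y⦄ (e : X.Adj x y), G.Walk (pathEnd e) (pathEnd e.symm)
  path_isPath : ∀ ⦃x y⦄ (e : X.Adj x y), (path e).IsPath
  path_symm : ∀ ⦃x y⦄ (e : X.Adj x y), path e.symm = (path e).reverse
  pathEnd_mem : ∀ ⦃x y⦄ (e : X.Adj x y), pathEnd e ∈ branch x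
  path_meets : ∀ ⦃x y⦄ (e : X.Adj x y) (z : W) (v : V), v ∈ (path e).support → v ∈ branch z →
    (z = x ∧ v = pathEnd e) ∨ (z = y ∧ v = pathEnd e.symm)
  path_int_disjoint : ∀ ⦃x y x' y'⦄ (e : X.Adj x y) (e' : X.Adj x' y'), s(x, y) ≠ s(x', y') →
    ∀ v, v ∈ (path e).support → v ∈ (path e').support → v = pathEnd e' ∨ v = pathEnd e'.symm
  fat_branch : ∀ ⦃x y⦄, x ≠ y → (K : ℕ∞) ≤ sDist G (branch x) (branch y)
  fat_path_branch : ∀ ⦃x y⦄ (e : X.Adj x y) (z : W), z ≠ x → z ≠ y →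
    (K : ℕ∞) ≤ sDist G (walkSupp (path e)) (branch z)
  fat_paths : ∀ ⦃x y x' y'⦄ (e : X.Adj x y) (e' : X.Adj x' y'), s(x, y) ≠ s(x', y') →
    (K : ℕ∞) ≤ sDist G (walkSupp (path e)) (walkSupp (path e'))

/-- `X` is a `K`-fat minor of `G`. -/
def IsFatMinor {V W : Type*} (G : SimpleGraph V) (X : SimpleGraph W) (K : ℕ) : Prop :=
  Nonempty (FatModel G X K)

/-- `W` is a `K`-fat `n`-path-connected set in `G`. -/
def FatPathConn {V : Type*} (G : SimpleGraph V) (K n : ℕ) (W : Set V) : Prop :=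
  (∃ S : Finset V, ↑S ⊆ W ∧ 2 * n ≤ S.card) ∧
  (∀ ⦃u v : V⦄, u ∈ W → v ∈ W → u ≠ v → (K : ℕ∞) ≤ G.edist u v) ∧
  ∀ l : ℕ, l ≤ n → ∀ A B : Finset V, ↑A ⊆ W → ↑B ⊆ W → A.card = l → B.card = l →
    ∃ (a b : Fin l → V) (P : ∀ i : Fin l, G.Walk (a i) (b i)),
      (∀ i, (P i).IsPath) ∧ (∀ i, a i ∈ A ∧ b i ∈ B) ∧
      ∀ i j, i ≠ j → (K : ℕ∞) ≤ sDist G (walkSupp (P i)) (walkSupp (P j))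

end CGT

namespace Ghdm

/-- Raw vertex codes for the graphs `G_{h,d,m}`:
`path k` is the `k`-th vertex of the base path; `tree j i p` is the vertex at position `p`
of the `i`-th binary tree at level `j` (the root being position `[]`); and
`spine j i k t e s` is the `s`-th internal vertex of the spine from the `k`-th leaf of that
tree to the `e`-th element of the `t`-th local gluing set at level `j-1`. -/
inductive Raw : Type where
  | path (k : ℕ)
  | tree (j i : ℕ) (p : List Bool)
  | spine (j i k t e s : ℕ)
deriving DecidableEq

/-- `N = 2^{h+1} - 1`, the number of copies of `G_{h,d,m-1}` glued inside `G_{h,d,m}`. -/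
def NN (h : ℕ) : ℕ := 2 ^ (h + 1) - 1

/-- Canonical representative of a raw vertex code: all tree roots are identified with the
single root `tree m 1 []`, and the leftmost leaf of tree `i > 1` is identified with the
rightmost leaf of tree `i - 1` (consecutive copies are glued along these leaves). -/
def canon (h m : ℕ) : Raw → Raw
  | .tree j i p =>
    if p = [] then .tree m 1 []
    else if p = List.replicate h false ∧ 1 < i then .tree j (i - 1) (List.replicate h true)
    else .tree j i p
  | x => x

/-- The `q`-bit binary representation of `i` (most significant bit first);
`false` means "left". -/
def natToBits (q i : ℕ) : List Bool := (List.range q).map fun a => Nat.testBit i (q - 1 - a)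

/-- Position of the `k`-th leaf (1-based, from the left) in a binary tree of height `h`. -/
def leafPos (h k : ℕ) : List Bool := natToBits h (k - 1)

/-- The `e`-th element of the `g`-th gluing set `V^{jv}_g` (at level `jv`):
its element `e = 1` is an anchor of the base path, and its element `e ≥ 2` is a shared
extreme leaf of the trees at level `e`. -/
def VsetElem (h d jv g e : ℕ) : Raw :=
  if e = 1 then .path ((g - 1) * NN h ^ (jv - 1) * (d + 1))
  else if (g - 1) * NN h ^ (jv - e) = 0 then .tree e 1 (List.replicate h false)
  else .tree e ((g - 1) * NN h ^ (jv - e)) (List.replicate h true)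

/-- Valid (canonical) vertex codes of `G_{h,d,m}`. -/
def Valid (h d m : ℕ) : Raw → Prop
  | .path k => k ≤ (d + 1) * NN h ^ (m - 1)
  | .tree j i p => 2 ≤ j ∧ j ≤ m ∧ 1 ≤ i ∧ i ≤ NN h ^ (m - j) ∧ p.length ≤ h ∧
      (p = [] → j = m ∧ i = 1) ∧ (p = List.replicate h false → p ≠ [] → i = 1)
  | .spine j i k t e s => 2 ≤ j ∧ j ≤ m ∧ 1 ≤ i ∧ i ≤ NN h ^ (m - j) ∧
      1 ≤ k ∧ k ≤ 2 ^ h ∧ (t = 2 * k - 2 ∨ t = 2 * k + 1) ∧ 1 ≤ t ∧ t ≤ 2 ^ (h + 1) ∧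
      1 ≤ e ∧ e ≤ j - 1 ∧ 1 ≤ s ∧ s ≤ d

/-- Generating adjacencies between raw vertex codes: consecutive base path vertices,
parent/child in the binary trees, consecutive spine vertices, a spine and the leaf it
starts at, a spine and the gluing-set vertex it ends at (the latter collapsed to a single
edge when `d = 0`). -/
inductive rawAdj (h d : ℕ) : Raw → Raw → Prop
  | base (k : ℕ) : rawAdj h d (.path k) (.path (k + 1))
  | child (j i : ℕ) (p : List Bool) (b : Bool) : p.length < h →
      rawAdj h d (.tree j i p) (.tree j i (p ++ [b]))
  | step (j i k t e s : ℕ) : rawAdj h d (.spine j i k t e s) (.spine j i k t e (s + 1))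
  | toLeaf (j i k t e : ℕ) : rawAdj h d (.tree j i (leafPos h k)) (.spine j i k t e 1)
  | toV (j i k t e : ℕ) :
      rawAdj h d (.spine j i k t e d) (VsetElem h d (j - 1) ((i - 1) * NN h + t) e)
  | short (j i k t e : ℕ) : d = 0 → 1 ≤ k → k ≤ 2 ^ h → (t = 2 * k - 2 ∨ t = 2 * k + 1) →
      1 ≤ t → t ≤ 2 ^ (h + 1) → 1 ≤ e → e ≤ j - 1 →
      rawAdj h d (.tree j i (leafPos h k)) (VsetElem h d (j - 1) ((i - 1) * NN h + t) e)

/-- Adjacency of canonical representatives. -/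
def rel (h d m : ℕ) (x y : Raw) : Prop :=
  ∃ a b, rawAdj h d a b ∧ x = canon h m a ∧ y = canon h m b

/-- The vertex set of `G_{h,d,m}`. -/
def Verts (h d m : ℕ) : Set Raw := {x | Valid h d m x}

/-- The graph `G_{h,d,m}`. -/
def G (h d m : ℕ) : SimpleGraph (Verts h d m) :=
  (SimpleGraph.fromRel (rel h d m)).induce (Verts h d m)

/-- Lift a set of raw codes to a set of vertices of `G_{h,d,m}`. -/
def lift {h d m : ℕ} (S : Set Raw) : Set (Verts h d m) := Subtype.val ⁻¹' S

/-- The root `R(G_{h,d,m})`. -/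
def RootR (m : ℕ) : Raw := .tree m 1 []

/-- The gluing set `V^{jv}_g` of `G_{h,d,m}`, as a set of raw codes. -/
def VsetRaw (h d m jv g : ℕ) : Set Raw :=
  {x | ∃ e, 1 ≤ e ∧ e ≤ jv ∧ x = canon h m (VsetElem h d jv g e)}

/-- The set `S(G_{h,d,m})`. -/
def SsetR (h d m : ℕ) : Set Raw :=
  VsetRaw h d m (m - 1) 1 ∪ {canon h m (.tree m 1 (leafPos h 1))}

/-- The set `T(G_{h,d,m})`. -/
def TsetR (h d m : ℕ) : Set Raw :=
  VsetRaw h d m (m - 1) (2 ^ (h + 1)) ∪ {canon h m (.tree m 1 (leafPos h (2 ^ h)))}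

/-- For a vertex of the top binary tree at position `p`, the (1-based) index of the
leftmost leaf of the top tree below it. -/
def kOf (h : ℕ) (p : List Bool) : ℕ :=
  (p.foldl (fun a b => 2 * a + if b then 1 else 0) 0) * 2 ^ (h - p.length) + 1

/-- `S(Δ(x))` for the vertex `x` of the top binary tree `B(G_{h,d,m})` at position `p`. -/
def SDeltaR (h d m : ℕ) (p : List Bool) : Set Raw :=
  VsetRaw h d m (m - 1) (2 * kOf h p - 1) ∪ {canon h m (.tree m 1 (leafPos h (kOf h p)))}

/-- The leaf of `B(G_{h,d,m})` immediately to the left of the leftmost leaf below the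
top-tree vertex at position `p`; it is the unique leaf joined by spines to `S(Δ(x))`. -/
def leafLeftR (h m : ℕ) (p : List Bool) : Raw :=
  canon h m (.tree m 1 (leafPos h (kOf h p - 1)))

end Ghdm

/-!
Two walks at distance more than two never meet and have no common neighbour, and being remote in
this sense is all that is used. By induction on the level, no copy of `G_{h,d,j}` is crossed from
its left to its right gluing set by two remote walks that avoid the root.

For the step, climb the new binary tree from its leaves. A tree vertex `x` *guards* the region
below it: of two remote walks crossing the region, neither starts at the extreme leaf unless it
passes through `x`. At an inner vertex `x` the region splits into the regions below the two
children, the copy between them, and two bundles of spines that cross over this copy. If a walk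
from the extreme leaf avoids `x`, then it contains the left child; remoteness keeps the other walk
away from both children, and hence from `x`. Now both walks have to pass the middle copy: the
first one leaves the left region along the spines, so it meets the copy only after having jumped
to the far side, and must traverse it backwards, while the second one cannot use the spines at
all. This contradicts the induction hypothesis for the middle copy. At the root of the tree, which
both walks avoid, this is the claim for the next level.
-/

namespace CGT

section Connection

variable {V : Type*} {G : SimpleGraph V} {W X X' Y Y' A A' B B' : Set V} {u v w x : V}

/-- `u` and `v` are joined by a walk of `G` all of whose vertices lie in `X`. -/
def ConnectedIn (G : SimpleGraph V) (X : Set V) (u v : V) : Prop :=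
  ∃ p : G.Walk u v, ∀ w ∈ p.support, w ∈ X

namespace ConnectedIn

theorem refl (hu : u ∈ X) : ConnectedIn G X u u :=
  ⟨.nil, by simpa using hu⟩

theorem left_mem (h : ConnectedIn G X u v) : u ∈ X :=
  let ⟨p, hp⟩ := h; hp u p.start_mem_support

theorem right_mem (h : ConnectedIn G X u v) : v ∈ X :=
  let ⟨p, hp⟩ := h; hp v p.end_mem_support

theorem symm (h : ConnectedIn G X u v) : ConnectedIn G X v u :=
  let ⟨p, hp⟩ := h; ⟨p.reverse, fun w hw => hp w (by simpa using hw)⟩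

theorem trans (huv : ConnectedIn G X u v) (hvw : ConnectedIn G X v w) : ConnectedIn G X u w := by
  obtain ⟨p, hp⟩ := huv
  obtain ⟨q, hq⟩ := hvw
  exact ⟨p.append q, fun a ha => (Walk.mem_support_append_iff p q |>.mp ha).elim (hp a) (hq a)⟩

theorem step (huv : ConnectedIn G X u v) (h : G.Adj v w) (hw : w ∈ X) : ConnectedIn G X u w :=
  huv.trans ⟨h.toWalk, by simpa using ⟨huv.right_mem, hw⟩⟩

theorem mono (h : ConnectedIn G X u v) (hX : X ⊆ X') : ConnectedIn G X' u v :=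
  let ⟨p, hp⟩ := h; ⟨p, fun w hw => hX (hp w hw)⟩

theorem mem_of_closed (h : ConnectedIn G X u v) {Z : Set V} (hu : u ∈ Z)
    (hZ : ∀ a ∈ Z, a ∈ X → ∀ b ∈ X, G.Adj a b → b ∈ Z) : v ∈ Z := by
  by_contra hv
  obtain ⟨p, hp⟩ := h
  obtain ⟨e, he, ha, hb⟩ := p.exists_boundary_dart Z hu hv
  exact hb (hZ _ ha (hp _ (p.dart_fst_mem_support_of_mem_darts he)) _
    (hp _ (p.dart_snd_mem_support_of_mem_darts he)) e.adj)

theorem exists_exit (h : ConnectedIn G X u v) (hu : u ∈ A) (hv : v ∉ A) :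
    ∃ a b, ConnectedIn G (X ∩ A) u a ∧ G.Adj a b ∧ b ∈ X ∧ b ∉ A := by
  by_contra! hexit
  refine hv (h.mem_of_closed (Z := {w | ConnectedIn G (X ∩ A) u w})
    (.refl ⟨h.left_mem, hu⟩) ?_).right_mem.2
  intro a ha _ b hb hab
  exact step ha hab ⟨hb, hexit a b ha hab hb⟩

theorem avoid (h : ConnectedIn G X u v) (hu : u ≠ x) (hx : ∀ w ∈ X, ¬ G.Adj w x) :
    ConnectedIn G (X \ {x}) u v := by
  refine h.mem_of_closed (Z := {w | ConnectedIn G (X \ {x}) u w}) (.refl ⟨h.left_mem, hu⟩) ?_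
  rintro a ha haX b hb hab
  exact step ha hab ⟨hb, by rintro rfl; exact hx a haX hab⟩

theorem map {V' : Type*} (f : V ↪ V') (h : ConnectedIn G X u v) :
    ConnectedIn (G.map f) (f '' X) (f u) (f v) := by
  obtain ⟨p, hp⟩ := h
  refine ⟨p.map (Embedding.map f G).toHom, fun w hw => ?_⟩
  obtain ⟨v, hv, rfl⟩ := List.mem_map.mp (Walk.support_map (Embedding.map f G).toHom p ▸ hw)
  exact ⟨v, hp v hv, rfl⟩

end ConnectedIn

/-- Some walk inside `X` leads from a vertex of `A` to a vertex of `B`. -/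
def Joins (G : SimpleGraph V) (X A B : Set V) : Prop :=
  ∃ a ∈ A, ∃ b ∈ B, ConnectedIn G X a b

namespace Joins

theorem symm (h : Joins G X A B) : Joins G X B A :=
  let ⟨a, ha, b, hb, hab⟩ := h; ⟨b, hb, a, ha, hab.symm⟩

theorem mono (h : Joins G X A B) (hX : X ⊆ X') (hA : A ⊆ A') (hB : B ⊆ B') :
    Joins G X' A' B' :=
  let ⟨a, ha, b, hb, hab⟩ := h; ⟨a, hA ha, b, hB hb, hab.mono hX⟩

theorem step (h : Joins G X A {v}) (hvw : G.Adj v w) (hw : w ∈ X) : Joins G X A {w} := by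
  obtain ⟨a, ha, _, rfl, hab⟩ := h
  exact ⟨a, ha, w, rfl, hab.step hvw hw⟩

theorem step_of_mem (hvA : v ∈ A) (hv : v ∈ X) (hvw : G.Adj v w) (hw : w ∈ X) :
    Joins G X A {w} :=
  ⟨v, hvA, w, rfl, (ConnectedIn.refl hv).step hvw hw⟩

theorem right_mem (h : Joins G X A {v}) : v ∈ X := by
  obtain ⟨_, _, _, rfl, hab⟩ := h
  exact hab.right_mem

end Joins

/-- No vertex lies in both sets or has neighbours in both; any two sets at distance more than
two are remote. -/
def Remote (G : SimpleGraph V) (X Y : Set V) : Prop :=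
  ∀ u ∈ X, ∀ v ∈ Y, u ≠ v ∧ ∀ w, G.Adj w u → ¬ G.Adj w v

namespace Remote

theorem symm (h : Remote G X Y) : Remote G Y X :=
  fun u hu v hv => ⟨(h v hv u hu).1.symm, fun w hwu hwv => (h v hv u hu).2 w hwv hwu⟩

theorem mono (h : Remote G X Y) (hX : X' ⊆ X) (hY : Y' ⊆ Y) : Remote G X' Y' :=
  fun u hu v hv => h u (hX hu) v (hY hv)

theorem notMem_right (h : Remote G X Y) (hu : u ∈ X) : u ∉ Y :=
  fun hu' => (h u hu u hu').1 rfl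

theorem map {V' : Type*} (f : V ↪ V') (h : Remote G X Y) :
    Remote (G.map f) (f '' X) (f '' Y) := by
  rintro _ ⟨u, hu, rfl⟩ _ ⟨v, hv, rfl⟩
  refine ⟨fun huv => (h u hu v hv).1 (f.injective huv), fun w hwu hwv => ?_⟩
  obtain ⟨-, a, b, hab, rfl, hb⟩ := hwu
  obtain ⟨-, a', b', hab', ha', hb'⟩ := hwv
  obtain rfl := f.injective ha'
  obtain rfl := f.injective hb
  obtain rfl := f.injective hb'
  exact (h _ hu _ hv).2 _ hab hab'

end Remote

theorem remote_of_two_lt_sDist (h : 2 < sDist G X Y) : Remote G X Y := by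
  intro u hu v hv
  have huv : 2 < G.edist u v :=
    h.trans_le ((iInf_le _ (⟨u, hu⟩ : X)).trans (iInf_le _ (⟨v, hv⟩ : Y)))
  refine ⟨?_, fun w hwu hwv => ?_⟩
  · rintro rfl
    simp at huv
  · exact huv.not_ge (edist_le (.cons hwu.symm (.cons hwv .nil)))

/-- There are no two remote connections from `A` to `B` inside `W`. -/
def NotDoublyCrossed (G : SimpleGraph V) (W A B : Set V) : Prop :=
  ∀ X ⊆ W, ∀ Y ⊆ W, Remote G X Y → Joins G X A B → ¬ Joins G Y A B

theorem NotDoublyCrossed.symm (h : NotDoublyCrossed G W A B) : NotDoublyCrossed G W B A :=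
  fun X hX Y hY hXY hXJ hYJ => h X hX Y hY hXY hXJ.symm hYJ.symm

theorem NotDoublyCrossed.of_subsingleton (hA : A.Subsingleton) : NotDoublyCrossed G W A B := by
  rintro X - Y - hXY ⟨a, ha, b, -, hab⟩ ⟨a', ha', b', -, hab'⟩
  obtain rfl := hA ha ha'
  exact hXY.notMem_right hab.left_mem hab'.left_mem

theorem NotDoublyCrossed.anti (h : NotDoublyCrossed G W A B) {W' : Set V} (hW : W' ⊆ W)
    (hA : A' ⊆ A) (hB : B' ⊆ B) : NotDoublyCrossed G W' A' B' :=
  fun X hX Y hY hXY hXJ hYJ => h X (hX.trans hW) Y (hY.trans hW) hXY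
    (hXJ.mono subset_rfl hA hB) (hYJ.mono subset_rfl hA hB)

/-- The apex `x` guards the crossings of `W` from `insert l A` to `R`: of two remote ones none
starts at `l` unless it passes through `x`. Reaching `x` counts as a crossing for the other
connection; this makes the notion inductive. -/
structure Guards (G : SimpleGraph V) (W : Set V) (x l : V) (A R : Set V) : Prop where
  notDoublyCrossed : NotDoublyCrossed G W A (insert x R)
  apex_mem : ∀ X ⊆ W, ∀ Y ⊆ W, Remote G X Y → Joins G X {l} R →
    Joins G Y (insert l A) (insert x R) → x ∈ X

theorem Guards.anti {l : V} {R R' : Set V} (h : Guards G W x l A R) (hA : A' ⊆ A)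
    (hR : R' ⊆ R) : Guards G W x l A' R' where
  notDoublyCrossed := h.notDoublyCrossed.anti subset_rfl hA (Set.insert_subset_insert hR)
  apex_mem X hX Y hY hXY hXJ hYJ := h.apex_mem X hX Y hY hXY
    (hXJ.mono subset_rfl subset_rfl hR)
    (hYJ.mono subset_rfl (Set.insert_subset_insert hA) (Set.insert_subset_insert hR))

theorem Guards.not_joins {l : V} {R : Set V} (h : Guards G W x l A R) (hX : X ⊆ W) (hY : Y ⊆ W)
    (hXY : Remote G X Y) (hx : x ∉ Y) (hXJ : Joins G X (insert l A) R)
    (hYJ : Joins G Y (insert l A) R) : ¬ Joins G X A R := by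
  have hR : R ⊆ insert x R := Set.subset_insert x R
  have hYl : ¬ Joins G Y {l} R := fun hYl =>
    hx (h.apex_mem Y hY X hX hXY.symm hYl (hXJ.mono subset_rfl subset_rfl hR))
  have hYA : Joins G Y A R := by
    obtain ⟨a, rfl | ha, b, hb, hab⟩ := hYJ
    · exact (hYl ⟨a, rfl, b, hb, hab⟩).elim
    · exact ⟨a, ha, b, hb, hab⟩
  exact fun hXA => h.notDoublyCrossed X hX Y hY hXY (hXA.mono subset_rfl subset_rfl hR)
    (hYA.mono subset_rfl subset_rfl hR)

theorem Guards.notDoublyCrossed_of_notMem {l : V} {R : Set V} (h : Guards G W x l A R)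
    (hx : x ∉ W) : NotDoublyCrossed G W (insert l A) R := by
  intro X hX Y hY hXY hXJ hYJ
  have hXA := h.not_joins hX hY hXY (fun hxY => hx (hY hxY)) hXJ hYJ
  obtain ⟨a, rfl | ha, b, hb, hab⟩ := hXJ
  · exact hx (hX (h.apex_mem X hX Y hY hXY ⟨a, rfl, b, hb, hab⟩
      (hYJ.mono subset_rfl subset_rfl (Set.subset_insert x R))))
  · exact hXA ⟨a, ha, b, hb, hab⟩

theorem Guards.of_isolated (hW : NotDoublyCrossed G (W \ {x}) A B) (hxA : x ∉ A)
    (hx : ∀ w ∈ W, ¬ G.Adj w x) : Guards G W x x A (insert x B) := by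
  have avoid {X : Set V} (hXW : X ⊆ W) {a b : V} (ha : a ≠ x) (hab : ConnectedIn G X a b) :
      ConnectedIn G (X \ {x}) a b := hab.avoid ha fun w hw => hx w (hXW hw)
  refine ⟨fun X hX Y hY hXY hXJ hYJ => ?_, fun _ _ _ _ _ hXJ _ => ?_⟩
  · have joins_B {X : Set V} (hX : X ⊆ W) (hXJ : Joins G X A (insert x (insert x B))) :
        Joins G (X \ {x}) A B := by
      obtain ⟨a, ha, b, hb, hab⟩ := hXJ
      have hab' := avoid hX (ne_of_mem_of_not_mem ha hxA) hab
      exact ⟨a, ha, b, by simpa [show b ≠ x from hab'.right_mem.2] using hb, hab'⟩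
    exact hW _ (Set.sdiff_subset_sdiff_left hX) _ (Set.sdiff_subset_sdiff_left hY)
      (hXY.mono Set.sdiff_subset Set.sdiff_subset) (joins_B hX hXJ) (joins_B hY hYJ)
  · obtain ⟨_, rfl, _, _, hab⟩ := hXJ
    exact hab.left_mem

end Connection

section Split

variable {V : Type*} {G : SimpleGraph V} {W Vl Vr Vm Kl Kr A B X Y L R : Set V}
  {x y z a b l t s : V}

/-- A decomposition of `W` below its apex `x`, with children `y` and `z`: apart from the edges at
`x`, it consists of a left part `Vl`, a right part `Vr`, a middle part `Vm` attached to
`Vl` in `Vl ∩ Vm` and to `Vr` in `Vr ∩ Vm`, and two crossing bundles: `Kl` connects `a ∈ Vl` to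
the right end of `Vm`, and `Kr` connects `b ∈ Vr` to the left end of `Vm`. -/
structure Split (G : SimpleGraph V) (W Vl Vr Vm Kl Kr : Set V) (x y z a b : V) : Prop where
  edge : ∀ u ∈ W, ∀ v ∈ W, u ≠ x → v ≠ x → G.Adj u v →
    (u ∈ Vl ∧ v ∈ Vl) ∨ (u ∈ Vr ∧ v ∈ Vr) ∨ (u ∈ Vm ∧ v ∈ Vm) ∨ (u ∈ Kl ∧ v ∈ Kl) ∨
      (u ∈ Kr ∧ v ∈ Kr)
  apex_edge : x ∈ W → ∀ v ∈ W, G.Adj v x → v = y ∨ v = z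
  adj_left : G.Adj x y
  adj_right : G.Adj x z
  left_mem : y ∈ Vl
  right_mem : z ∈ Vr
  apex_notMem_left : x ∉ Vl
  apex_notMem_right : x ∉ Vr
  disjoint : ∀ u ∈ Vl, u ∉ Vr
  crossing_disjoint : ∀ u ∈ Kl, u ∉ Kr
  Kl_inter_Vl : ∀ u ∈ Kl, u ∈ Vl → u = a
  Kl_inter_Vr : ∀ u ∈ Kl, u ∈ Vr → u ∈ Vm
  Kl_inter_Vm : ∀ u ∈ Kl, u ∈ Vm → u ∈ Vr
  Kr_inter_Vr : ∀ u ∈ Kr, u ∈ Vr → u = b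
  Kr_inter_Vl : ∀ u ∈ Kr, u ∈ Vl → u ∈ Vm
  Kr_inter_Vm : ∀ u ∈ Kr, u ∈ Vm → u ∈ Vl

namespace Split

theorem mirror (H : Split G W Vl Vr Vm Kl Kr x y z a b) :
    Split G W Vr Vl Vm Kr Kl x z y b a where
  edge u hu v hv hux hvx huv := by
    have := H.edge u hu v hv hux hvx huv
    tauto
  apex_edge hx v hv hvx := (H.apex_edge hx v hv hvx).symm
  adj_left := H.adj_right
  adj_right := H.adj_left
  left_mem := H.right_mem
  right_mem := H.left_mem
  apex_notMem_left := H.apex_notMem_right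
  apex_notMem_right := H.apex_notMem_left
  disjoint u hr hl := H.disjoint u hl hr
  crossing_disjoint u hr hl := H.crossing_disjoint u hl hr
  Kl_inter_Vl := H.Kr_inter_Vr
  Kl_inter_Vr := H.Kr_inter_Vl
  Kl_inter_Vm := H.Kr_inter_Vm
  Kr_inter_Vr := H.Kl_inter_Vl
  Kr_inter_Vl := H.Kl_inter_Vr
  Kr_inter_Vm := H.Kl_inter_Vm

theorem exists_exit (H : Split G W Vl Vr Vm Kl Kr x y z a b) (hX : X ⊆ W) (hs : s ∈ Vl)
    (ht : t ∉ Vl) (h : ConnectedIn G X s t) :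
    ∃ u, ConnectedIn G (X ∩ Vl) s u ∧ (u ∈ insert a (Vl ∩ Vm) ∨ u = y ∧ x ∈ X) := by
  obtain ⟨u, v, hsu, huv, hvX, hv⟩ := h.exists_exit hs ht
  obtain ⟨huX, hu⟩ := hsu.right_mem
  refine ⟨u, hsu, ?_⟩
  by_cases hvx : v = x
  · subst hvx
    obtain rfl | rfl := H.apex_edge (hX hvX) u (hX huX) huv
    · exact .inr ⟨rfl, hvX⟩
    · exact (H.disjoint _ hu H.right_mem).elim
  · have hux : u ≠ x := ne_of_mem_of_not_mem hu H.apex_notMem_left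
    rcases H.edge u (hX huX) v (hX hvX) hux hvx huv with h | h | h | h | h
    · exact (hv h.2).elim
    · exact (H.disjoint _ hu h.1).elim
    · exact .inl (.inr ⟨hu, h.1⟩)
    · exact .inl (.inl (H.Kl_inter_Vl _ h.1 hu))
    · exact .inl (.inr ⟨hu, H.Kr_inter_Vl _ h.1 hu⟩)

theorem joins_left (H : Split G W Vl Vr Vm Kl Kr x y z a b) (hX : X ⊆ W) (hL : L ⊆ Vl)
    (hR : Disjoint R Vl) (h : Joins G X L R) :
    Joins G (X ∩ Vl) L (insert y (insert a (Vl ∩ Vm))) := by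
  obtain ⟨s, hs, t, ht, hst⟩ := h
  obtain ⟨u, hsu, hu⟩ := H.exists_exit hX (hL hs) (hR.notMem_of_mem_left ht) hst
  exact ⟨s, hs, u, hu.elim .inr fun hu => .inl hu.1, hsu⟩

theorem joins_left_of_apex_notMem (H : Split G W Vl Vr Vm Kl Kr x y z a b) (hX : X ⊆ W)
    (hx : x ∉ X) (hL : L ⊆ Vl) (hR : Disjoint R Vl) (h : Joins G X L R) :
    Joins G (X ∩ Vl) L (insert a (Vl ∩ Vm)) := by
  obtain ⟨s, hs, t, ht, hst⟩ := h
  obtain ⟨u, hsu, hu⟩ := H.exists_exit hX (hL hs) (hR.notMem_of_mem_left ht) hst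
  exact ⟨s, hs, u, hu.resolve_right fun hu => hx hu.2, hsu⟩

theorem edge_of_apex_notMem (H : Split G W Vl Vr Vm Kl Kr x y z a b) (hX : X ⊆ W) (hx : x ∉ X)
    {u v : V} (hu : u ∈ X) (hv : v ∈ X) (huv : G.Adj u v) :
    (u ∈ Vl ∧ v ∈ Vl) ∨ (u ∈ Vr ∧ v ∈ Vr) ∨ (u ∈ Vm ∧ v ∈ Vm) ∨ (u ∈ Kl ∧ v ∈ Kl) ∨
      (u ∈ Kr ∧ v ∈ Kr) :=
  H.edge u (hX hu) v (hX hv) (ne_of_mem_of_not_mem hu hx) (ne_of_mem_of_not_mem hv hx) huv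

theorem joins_middle_of_corners_notMem (H : Split G W Vl Vr Vm Kl Kr x y z a b) (hX : X ⊆ W)
    (hx : x ∉ X) (ha : a ∉ X) (hb : b ∉ X) (hL : L ⊆ Vl) (hR : R ⊆ Vr) (h : Joins G X L R) :
    Joins G (X ∩ Vm) (Vl ∩ Vm) (Vr ∩ Vm) := by
  by_contra hm
  obtain ⟨s, hs, t, ht, hst⟩ := h
  let reach : Set V := {w | Joins G (X ∩ Vm) (Vl ∩ Vm) {w}}
  have reach_sub {u : V} (hu : u ∈ reach) : u ∈ Vm := (Joins.right_mem hu).2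
  have reach_notMem {u : V} (hu : u ∈ reach) : u ∉ Vr := fun hur =>
    hm (Joins.mono hu subset_rfl subset_rfl (by simpa using ⟨hur, reach_sub hu⟩))
  have ht' : t ∈ Vl ∪ Kr ∪ reach := by
    refine hst.mem_of_closed (.inl (.inl (hL hs))) fun u hu huX v hvX huv => ?_
    have reach_step (hu : u ∈ reach) (hv : v ∈ Vm) : v ∈ reach :=
      Joins.step hu huv ⟨hvX, hv⟩
    have reach_start (hul : u ∈ Vl) (hum : u ∈ Vm) (hv : v ∈ Vm) : v ∈ reach :=
      .step_of_mem ⟨hul, hum⟩ ⟨huX, hum⟩ huv ⟨hvX, hv⟩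
    have hedge := H.edge_of_apex_notMem hX hx huX hvX huv
    clear_value reach
    grind [Split]
  have := hR ht
  have := hst.right_mem
  clear_value reach
  grind [Split]

theorem joins_middle_of_not_joins_ends (H : Split G W Vl Vr Vm Kl Kr x y z a b) (hX : X ⊆ W)
    (hx : x ∉ X) (ht : t ∈ Vr) (hst : ConnectedIn G X s t)
    (hsa : ConnectedIn G (X ∩ Vl) s a) (hbt : ConnectedIn G (X ∩ Vr) b t)
    (hl : ¬ Joins G (X ∩ Vl) {s} (Vl ∩ Vm)) (hr : ¬ Joins G (X ∩ Vr) (Vr ∩ Vm) {t}) :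
    Joins G (X ∩ Vm) (Vr ∩ Vm) (Vl ∩ Vm) := by
  by_contra hm
  let start : Set V := {w | ConnectedIn G (X ∩ Vl) s w}
  let right : Set V := {w | Joins G (X ∩ Vr) (Vr ∩ Vm) {w}}
  let middle : Set V := {w | Joins G (X ∩ Vm) (Vr ∩ Vm) {w}}
  have start_sub {u : V} (hu : u ∈ start) : u ∈ Vl := (ConnectedIn.right_mem hu).2
  have start_notMem {u : V} (hu : u ∈ start) : u ∉ Vm := fun hum =>
    hl ⟨s, rfl, u, ⟨start_sub hu, hum⟩, hu⟩
  have right_sub {u : V} (hu : u ∈ right) : u ∈ Vr := (Joins.right_mem hu).2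
  have right_ne {u : V} (hu : u ∈ right) : u ≠ b := by
    rintro rfl
    obtain ⟨c, hc, _, rfl, hcb⟩ := hu
    exact hr ⟨c, hc, t, rfl, hcb.trans hbt⟩
  have middle_sub {u : V} (hu : u ∈ middle) : u ∈ Vm := (Joins.right_mem hu).2
  have middle_notMem {u : V} (hu : u ∈ middle) : u ∉ Vl := fun hul =>
    hm (Joins.mono hu subset_rfl subset_rfl (by simpa using ⟨hul, middle_sub hu⟩))
  have corner_mem {u : V} (huX : u ∈ X) (hur : u ∈ Vr) (hum : u ∈ Vm) : u ∈ right :=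
    ⟨u, ⟨hur, hum⟩, u, rfl, .refl ⟨huX, hur⟩⟩
  have ht' : t ∈ start ∪ Kl ∪ right ∪ middle := by
    refine hst.mem_of_closed (.inl (.inl (.inl (.refl hsa.left_mem)))) fun u hu huX v hvX huv => ?_
    have start_step (hu : u ∈ start) (hv : v ∈ Vl) : v ∈ start :=
      ConnectedIn.step hu huv ⟨hvX, hv⟩
    have right_step (hu : u ∈ right) (hv : v ∈ Vr) : v ∈ right :=
      Joins.step hu huv ⟨hvX, hv⟩
    have middle_step (hu : u ∈ middle) (hv : v ∈ Vm) : v ∈ middle :=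
      Joins.step hu huv ⟨hvX, hv⟩
    have middle_start (hur : u ∈ Vr) (hum : u ∈ Vm) (hv : v ∈ Vm) : v ∈ middle :=
      .step_of_mem ⟨hur, hum⟩ ⟨huX, hum⟩ huv ⟨hvX, hv⟩
    have hedge := H.edge_of_apex_notMem hX hx huX hvX huv
    have ha : a ∈ start := hsa
    clear_value start right middle
    grind [Split]
  have := hst.right_mem
  have ht_right : t ∉ right := hr
  clear_value start right middle
  grind [Split]

theorem joins_avoiding_apex (H : Split G W Vl Vr Vm Kl Kr x y z a b) (hX : X ⊆ W) (hy : y ∉ X)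
    (hz : z ∉ X) (hL : L ⊆ Vl) (h : Joins G X L (insert x R)) : Joins G (X \ {x}) L R := by
  obtain ⟨s, hs, t, ht, hst⟩ := h
  by_cases hx : x ∈ W
  · have isolated : ∀ w ∈ X, ¬ G.Adj w x := by
      intro w hw hwx
      obtain rfl | rfl := H.apex_edge hx w (hX hw) hwx <;> contradiction
    have hst' := hst.avoid (ne_of_mem_of_not_mem (hL hs) H.apex_notMem_left) isolated
    exact ⟨s, hs, t, ht.resolve_left hst'.right_mem.2, hst'⟩
  · have hxX : x ∉ X := fun h => hx (hX h)
    exact ⟨s, hs, t, ht.resolve_left (ne_of_mem_of_not_mem hst.right_mem hxX),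
      hst.mono (Set.subset_sdiff_singleton subset_rfl hxX)⟩

theorem connectedIn_corner (H : Split G W Vl Vr Vm Kl Kr x y z a b)
    (haL : Guards G Vl y a (Vl ∩ Vm) L) (hL : L ⊆ Vl) (hR : R ⊆ Vr) (hX : X ⊆ W) (hxX : x ∉ X)
    (hY : Y ⊆ W) (hxY : x ∉ Y) (hyY : y ∉ Y) (hXY : Remote G X Y) (hs : s ∈ L) (ht : t ∈ R)
    (hst : ConnectedIn G X s t) (hYJ : Joins G Y L R) :
    ConnectedIn G (X ∩ Vl) s a ∧ ¬ Joins G (X ∩ Vl) {s} (Vl ∩ Vm) := by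
  have hRl : Disjoint R Vl := Set.disjoint_left.mpr fun u hu hul => H.disjoint u hul (hR hu)
  have hsL : {s} ⊆ L := Set.singleton_subset_iff.mpr hs
  have hXl := H.joins_left_of_apex_notMem hX hxX (hsL.trans hL) hRl ⟨s, rfl, t, ht, hst⟩
  have hYl := H.joins_left_of_apex_notMem hY hxY hL hRl hYJ
  have hs_end : ¬ Joins G (X ∩ Vl) {s} (Vl ∩ Vm) := fun h =>
    haL.not_joins Set.inter_subset_right Set.inter_subset_right
      (hXY.mono Set.inter_subset_left Set.inter_subset_left) (fun h => hyY h.1)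
      (hXl.mono subset_rfl hsL subset_rfl).symm hYl.symm (h.mono subset_rfl hsL subset_rfl).symm
  obtain ⟨_, rfl, u, rfl | hu, hsu⟩ := hXl
  · exact ⟨hsu, hs_end⟩
  · exact (hs_end ⟨_, rfl, u, hu, hsu⟩).elim

theorem not_joins_of_joins (H : Split G W Vl Vr Vm Kl Kr x y z a b)
    (haL : Guards G Vl y a (Vl ∩ Vm) L) (hbR : Guards G Vr z b (Vr ∩ Vm) R)
    (hm : NotDoublyCrossed G Vm (Vl ∩ Vm) (Vr ∩ Vm)) (hL : L ⊆ Vl) (hR : R ⊆ Vr)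
    (hX : X ⊆ W) (hxX : x ∉ X) (hY : Y ⊆ W) (hxY : x ∉ Y) (hyY : y ∉ Y) (hzY : z ∉ Y)
    (hXY : Remote G X Y) (hXJ : Joins G X L R) : ¬ Joins G Y L R := by
  intro hYJ
  obtain ⟨s, hs, t, ht, hst⟩ := hXJ
  obtain ⟨hsa, hs_end⟩ := H.connectedIn_corner haL hL hR hX hxX hY hxY hyY hXY hs ht hst hYJ
  obtain ⟨htb, ht_end⟩ := H.mirror.connectedIn_corner hbR hR hL hX hxX hY hxY hzY hXY ht hs
    hst.symm hYJ.symm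
  refine hm _ Set.inter_subset_right _ Set.inter_subset_right
    (hXY.mono Set.inter_subset_left Set.inter_subset_left)
    (H.joins_middle_of_not_joins_ends hX hxX (hR ht) hst hsa htb.symm hs_end
      fun h => ht_end h.symm).symm
    (H.joins_middle_of_corners_notMem hY hxY (hXY.notMem_right hsa.right_mem.1)
      (hXY.notMem_right htb.right_mem.1) hL hR hYJ)

end Split

theorem Guards.of_split (H : Split G W Vl Vr Vm Kl Kr x y z a b)
    (hLa : Guards G Vl y l A (insert a (Vl ∩ Vm)))
    (haL : Guards G Vl y a (Vl ∩ Vm) (insert l A))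
    (hbR : Guards G Vr z b (Vr ∩ Vm) R) (hm : NotDoublyCrossed G Vm (Vl ∩ Vm) (Vr ∩ Vm))
    (hL : insert l A ⊆ Vl) (hR : R ⊆ Vr) : Guards G W x l A R := by
  have hRl : Disjoint R Vl := Set.disjoint_left.mpr fun u hu hul => H.disjoint u hul (hR hu)
  have hxR : Disjoint (insert x R) Vl := Set.disjoint_insert_left.mpr ⟨H.apex_notMem_left, hRl⟩
  refine ⟨fun X hX Y hY hXY hXJ hYJ => ?_, fun X hX Y hY hXY hXJ hYJ => ?_⟩
  · have hA : A ⊆ Vl := (Set.subset_insert l A).trans hL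
    exact hLa.notDoublyCrossed _ Set.inter_subset_right _ Set.inter_subset_right
      (hXY.mono Set.inter_subset_left Set.inter_subset_left)
      (H.joins_left hX hA hxR hXJ) (H.joins_left hY hA hxR hYJ)
  · by_contra hxX
    have hlL : l ∈ insert l A := Set.mem_insert l A
    have hyX : y ∈ X := (hLa.apex_mem _ Set.inter_subset_right _ Set.inter_subset_right
      (hXY.mono Set.inter_subset_left Set.inter_subset_left)
      (H.joins_left_of_apex_notMem hX hxX (Set.singleton_subset_iff.mpr (hL hlL)) hRl hXJ)
      (H.joins_left hY hL hxR hYJ)).1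
    have hyY : y ∉ Y := hXY.notMem_right hyX
    have hzY : z ∉ Y := fun hz => (hXY y hyX z hz).2 x H.adj_left H.adj_right
    exact H.not_joins_of_joins haL hbR hm hL hR hX hxX (Y := Y \ {x})
      (Set.sdiff_subset.trans hY) (fun h => h.2 rfl) (fun h => hyY h.1) (fun h => hzY h.1)
      (hXY.mono subset_rfl Set.sdiff_subset)
      (hXJ.mono subset_rfl (Set.singleton_subset_iff.mpr hlL) subset_rfl)
      (H.joins_avoiding_apex hY hyY hzY hL hYJ)

/-- `x` guards the crossings of `W` between `insert l A` and `insert t B` from both ends. -/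
def GuardsBoth (G : SimpleGraph V) (W : Set V) (x l : V) (A : Set V) (t : V) (B : Set V) : Prop :=
  Guards G W x l A (insert t B) ∧ Guards G W x t B (insert l A)

theorem GuardsBoth.anti {A' B' : Set V} (h : GuardsBoth G W x l A t B) (hA : A' ⊆ A)
    (hB : B' ⊆ B) : GuardsBoth G W x l A' t B' :=
  ⟨h.1.anti hA (Set.insert_subset_insert hB), h.2.anti hB (Set.insert_subset_insert hA)⟩

theorem GuardsBoth.of_isolated (hW : NotDoublyCrossed G (W \ {x}) A B) (hxA : x ∉ A) (hxB : x ∉ B)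
    (hx : ∀ w ∈ W, ¬ G.Adj w x) : GuardsBoth G W x x A x B :=
  ⟨.of_isolated hW hxA hx, .of_isolated hW.symm hxB hx⟩

theorem GuardsBoth.of_split (H : Split G W Vl Vr Vm Kl Kr x y z a b)
    (hl : GuardsBoth G Vl y l A a (Vl ∩ Vm)) (hr : GuardsBoth G Vr z b (Vr ∩ Vm) t B)
    (hm : NotDoublyCrossed G Vm (Vl ∩ Vm) (Vr ∩ Vm)) (hL : insert l A ⊆ Vl)
    (hR : insert t B ⊆ Vr) : GuardsBoth G W x l A t B :=
  ⟨.of_split H hl.1 hl.2 hr.1 hm hL hR, .of_split H.mirror hr.2 hr.1 hl.2 hm.symm hR hL⟩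

end Split

end CGT

namespace Ghdm

open CGT

section Bits

theorem natToBits_succ (q i : ℕ) :
    natToBits (q + 1) i = natToBits q (i / 2) ++ [Nat.testBit i 0] := by
  unfold natToBits
  rw [List.range_succ, List.map_append]
  congr 1
  · refine List.map_congr_left fun a ha => ?_
    have : q + 1 - 1 - a = (q - 1 - a) + 1 := by have := List.mem_range.mp ha; omega
    rw [this, Nat.testBit_succ]
  · simp

@[simp]
theorem length_natToBits (q i : ℕ) : (natToBits q i).length = q := by
  simp [natToBits]

theorem natToBits_append (q i : ℕ) (b : Bool) :
    natToBits q i ++ [b] = natToBits (q + 1) (2 * i + b.toNat) := by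
  rw [natToBits_succ, Nat.testBit_zero]
  cases b <;> simp [Nat.add_div]

theorem natToBits_zero_right (q : ℕ) : natToBits q 0 = List.replicate q false := by
  simp [natToBits, List.map_const']

theorem natToBits_two_pow_sub_one (q : ℕ) : natToBits q (2 ^ q - 1) = List.replicate q true := by
  refine List.eq_replicate_iff.mpr ⟨length_natToBits q _, fun b hb => ?_⟩
  obtain ⟨a, ha, rfl⟩ := List.mem_map.mp hb
  have := List.mem_range.mp ha
  simp only [Nat.testBit_two_pow_sub_one, decide_eq_true_eq]
  omega

theorem natToBits_injOn (q : ℕ) : Set.InjOn (natToBits q) (Set.Iio (2 ^ q)) := by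
  induction q with
  | zero => intro i hi k hk _; simp_all
  | succ q ih =>
    intro i hi k hk hik
    rw [natToBits_succ, natToBits_succ] at hik
    obtain ⟨hdiv, hbit⟩ := List.append_inj' hik rfl
    have hmod : i % 2 = k % 2 := by simp only [List.cons.injEq, Nat.testBit_zero] at hbit; grind
    simp only [Set.mem_Iio, pow_succ] at hi hk
    have := ih (show i / 2 < 2 ^ q by omega) (show k / 2 < 2 ^ q by omega) hdiv
    omega

theorem exists_natToBits_eq (p : List Bool) : ∃ i < 2 ^ p.length, natToBits p.length i = p := by
  induction p using List.reverseRecOn with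
  | nil => exact ⟨0, by simp [natToBits]⟩
  | append_singleton p b ih =>
    obtain ⟨i, hi, hp⟩ := ih
    refine ⟨2 * i + b.toNat, ?_, ?_⟩
    · have := b.toNat_lt
      simp only [List.length_append, List.length_singleton, pow_succ]
      omega
    · rw [List.length_append, List.length_singleton, ← natToBits_append, hp]

end Bits

section Shadow

/-- The level of a vertex: `1` on the base path, and `j` on the trees and spines that are added
when passing from `G_{h,d,j-1}` to `G_{h,d,j}`. -/
def level : Raw → ℕ
  | .path _ => 1
  | .tree j _ _ => j
  | .spine j _ _ _ _ _ => j

/-- The number of base path edges spanned by a copy of `G_{h,d,j}`. -/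
def width (h d j : ℕ) : ℕ := NN h ^ (j - 1) * (d + 1)

/-- The left end of the shadow of a vertex on the base path. A vertex of a copy of `G_{h,d,j}`
casts its shadow on the whole base path of this copy, except that the two extreme leaves, which
are shared with the neighbouring copies, cast their shadow on the corresponding endvertex. -/
def leftEnd (h d : ℕ) : Raw → ℕ
  | .path k => k
  | .tree j i p => if p = List.replicate h true then i * width h d j else (i - 1) * width h d j
  | .spine j i _ _ _ _ => (i - 1) * width h d j

/-- The right end of the shadow of a vertex on the base path; see `leftEnd`. -/
def rightEnd (h d : ℕ) : Raw → ℕ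
  | .path k => k
  | .tree j i p => if p = List.replicate h false then (i - 1) * width h d j else i * width h d j
  | .spine j i _ _ _ _ => i * width h d j

variable {h d j i : ℕ}

theorem replicate_true_ne_false (hh : h ≠ 0) : List.replicate h true ≠ List.replicate h false := by
  simp [hh]

theorem NN_add_one (h : ℕ) : NN h + 1 = 2 * 2 ^ h := by
  have : 0 < 2 ^ h := by positivity
  rw [NN, pow_succ]
  omega

theorem NN_pos (h : ℕ) : 0 < NN h := by
  have := NN_add_one h
  have : 0 < 2 ^ h := by positivity
  omega

theorem width_pos (h d j : ℕ) : 0 < width h d j :=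
  Nat.mul_pos (pow_pos (NN_pos h) _) d.succ_pos

theorem le_of_mul_width_le {a b : ℕ} (hab : a * width h d j ≤ b * width h d j) : a ≤ b :=
  Nat.le_of_mul_le_mul_right hab (width_pos h d j)

theorem width_eq_pow_mul {e : ℕ} (he : e ≠ 0) (hej : e ≤ j) :
    width h d j = NN h ^ (j - e) * width h d e := by
  rw [width, width, ← mul_assoc, ← pow_add]
  congr 2
  omega

theorem width_eq_mul (hj : 2 ≤ j) : width h d j = NN h * width h d (j - 1) := by
  rw [width_eq_pow_mul (e := j - 1) (by omega) (by omega), show j - (j - 1) = 1 by omega, pow_one]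

theorem leftEnd_le_rightEnd (hh : h ≠ 0) (w : Raw) : leftEnd h d w ≤ rightEnd h d w := by
  cases w with
  | path k => exact le_rfl
  | tree j i p =>
    have := replicate_true_ne_false hh
    have := Nat.mul_le_mul_right (width h d j) (Nat.sub_le i 1)
    grind [leftEnd, rightEnd]
  | spine j i k t e s => exact Nat.mul_le_mul_right _ (Nat.sub_le i 1)

end Shadow

section Segment

variable {h d m j a b a' b' : ℕ} {w : Raw}

/-- The codes of level at most `j` whose shadow lies between the left end of the `a`-th and the
left end of the `b`-th copy of `G_{h,d,j}`; copies are counted from `0`. -/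
def cell (h d j a b : ℕ) : Set Raw :=
  {w | level w ≤ j ∧ a * width h d j ≤ leftEnd h d w ∧ rightEnd h d w ≤ b * width h d j}

/-- The vertices of `G_{h,d,m}`, other than the root, in the union of the copies of `G_{h,d,j}`
numbered `a, …, b - 1`. For `a = b` this is the gluing set between the copies `a - 1` and `a`. -/
def segment (h d m j a b : ℕ) : Set Raw :=
  {w | w ∈ cell h d j a b ∧ Valid h d m w ∧ w ≠ RootR m}

theorem cell_mono (ha : a' ≤ a) (hb : b ≤ b') : cell h d j a b ⊆ cell h d j a' b' :=
  fun _ hw => ⟨hw.1, (Nat.mul_le_mul_right _ ha).trans hw.2.1,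
    hw.2.2.trans (Nat.mul_le_mul_right _ hb)⟩

theorem segment_mono (ha : a' ≤ a) (hb : b ≤ b') : segment h d m j a b ⊆ segment h d m j a' b' :=
  fun _ hw => ⟨cell_mono ha hb hw.1, hw.2⟩

theorem le_of_mem_segment (hh : h ≠ 0) (hw : w ∈ segment h d m j a b)
    (hw' : w ∈ segment h d m j a' b') : a ≤ b' :=
  le_of_mul_width_le (hw.1.2.1.trans ((leftEnd_le_rightEnd hh w).trans hw'.1.2.2))

theorem mem_segment_of_mem (hw : w ∈ segment h d m j a b) (hw' : w ∈ segment h d m j a' b') :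
    w ∈ segment h d m j a b' :=
  ⟨⟨hw.1.1, hw.1.2.1, hw'.1.2.2⟩, hw.2⟩

theorem cell_subset_cell_succ (hj : 1 ≤ j) :
    cell h d j (a * NN h) (b * NN h) ⊆ cell h d (j + 1) a b := by
  rintro w ⟨hl, ha, hb⟩
  have hw : width h d (j + 1) = NN h * width h d j := width_eq_mul (by omega)
  exact ⟨by omega, by rwa [hw, ← mul_assoc], by rwa [hw, ← mul_assoc]⟩

theorem mem_segment_of_mem_segment_succ (hj : 1 ≤ j) (hl : level w ≤ j)
    (hw : w ∈ segment h d m (j + 1) a b) : w ∈ segment h d m j (a * NN h) (b * NN h) := by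
  obtain ⟨⟨-, ha, hb⟩, hv⟩ := hw
  have hw : width h d (j + 1) = NN h * width h d j := width_eq_mul (by omega)
  rw [hw, ← mul_assoc] at ha hb
  exact ⟨⟨hl, ha, hb⟩, hv⟩

theorem VsetElem_mem_cell (hh : h ≠ 0) {g e : ℕ} (he : 1 ≤ e) (hej : e ≤ j) :
    VsetElem h d j g e ∈ cell h d j (g - 1) (g - 1) := by
  have hne := replicate_true_ne_false hh
  have hwidth : (g - 1) * width h d j = (g - 1) * NN h ^ (j - e) * width h d e := by
    rw [width_eq_pow_mul (by omega) hej, mul_assoc]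
  rw [cell, Set.mem_ofPred_eq, hwidth]
  unfold VsetElem
  split_ifs with h1 h0
  · subst h1
    simp [level, leftEnd, rightEnd, width, mul_assoc, hej]
  · simp [level, leftEnd, rightEnd, h0, hej]
  · simp [level, leftEnd, rightEnd, hne, hej]

theorem canon_VsetElem (hh : h ≠ 0) (g e : ℕ) :
    canon h m (VsetElem h d j g e) = VsetElem h d j g e := by
  unfold VsetElem
  split_ifs <;> simp [canon, hh]

theorem VsetElem_ne_RootR (hh : h ≠ 0) (g e : ℕ) : VsetElem h d j g e ≠ RootR m := by
  unfold VsetElem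
  split_ifs <;> simp [RootR, hh]

theorem canon_VsetElem_mem_segment (hh : h ≠ 0) {g e : ℕ} (he : 1 ≤ e) (hej : e ≤ j)
    (hv : Valid h d m (canon h m (VsetElem h d j g e))) :
    canon h m (VsetElem h d j g e) ∈ segment h d m j (g - 1) (g - 1) := by
  rw [canon_VsetElem hh] at hv ⊢
  exact ⟨VsetElem_mem_cell hh he hej, hv, VsetElem_ne_RootR hh g e⟩

end Segment

section Node

variable {h d m j i i' r r' c c' : ℕ}

/-- The vertex of height `r` of the `i`-th tree of level `j` (counted from `0`) above the leaves
`c * 2 ^ r, …, (c + 1) * 2 ^ r - 1`. -/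
def node (h m j i r c : ℕ) : Raw := canon h m (.tree j (i + 1) (natToBits (h - r) c))

theorem node_eq_ite (hr : r < h) : node h m j i r c =
    if natToBits (h - r) c = List.replicate h false ∧ i ≠ 0 then .tree j i (List.replicate h true)
    else .tree j (i + 1) (natToBits (h - r) c) := by
  have hne : natToBits (h - r) c ≠ [] := by
    rw [← List.length_pos_iff, length_natToBits]
    omega
  simp [node, canon, hne, Nat.pos_iff_ne_zero]

theorem node_self (c : ℕ) : node h m j i h c = RootR m := by
  simp [node, canon, RootR, natToBits]

theorem lt_two_pow_sub (hr : r ≤ h) (hc : (c + 1) * 2 ^ r ≤ 2 ^ h) : c < 2 ^ (h - r) := by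
  have h2 : 2 ^ h = 2 ^ (h - r) * 2 ^ r := by rw [← pow_add, Nat.sub_add_cancel hr]
  rw [h2] at hc
  exact Nat.le_of_mul_le_mul_right hc (by positivity)

theorem natToBits_sub_inj (hr : r ≤ h) (hc : (c + 1) * 2 ^ r ≤ 2 ^ h) (hr' : r' ≤ h)
    (hc' : (c' + 1) * 2 ^ r' ≤ 2 ^ h) (heq : natToBits (h - r) c = natToBits (h - r') c') :
    r = r' ∧ c = c' := by
  have hlen : h - r = h - r' := by simpa using congrArg List.length heq
  obtain rfl : r = r' := by omega
  exact ⟨rfl, natToBits_injOn _ (lt_two_pow_sub hr hc) (lt_two_pow_sub hr hc') heq⟩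

theorem natToBits_sub_eq_replicate_iff (hr : r ≤ h) (hc : (c + 1) * 2 ^ r ≤ 2 ^ h) :
    natToBits (h - r) c = List.replicate h false ↔ r = 0 ∧ c = 0 := by
  refine ⟨fun heq => ?_, ?_⟩
  · refine natToBits_sub_inj hr hc h.zero_le (by simp [Nat.one_le_two_pow]) ?_
    rw [heq, Nat.sub_zero, natToBits_zero_right]
  · rintro ⟨rfl, rfl⟩
    rw [Nat.sub_zero, natToBits_zero_right]

theorem node_ne_RootR (hr : r < h) : node h m j i r c ≠ RootR m := by
  have hlen := length_natToBits (h - r) c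
  have hlen' := List.length_replicate (n := h) (a := true)
  rw [node_eq_ite hr, RootR]
  split_ifs <;> grind

theorem node_inj (hr : r < h) (hc : (c + 1) * 2 ^ r ≤ 2 ^ h) (hr' : r' < h)
    (hc' : (c' + 1) * 2 ^ r' ≤ 2 ^ h) (heq : node h m j i r c = node h m j i r' c') :
    r = r' ∧ c = c' := by
  have hbits := natToBits_sub_eq_replicate_iff hr.le hc
  have hbits' := natToBits_sub_eq_replicate_iff hr'.le hc'
  have hinj := natToBits_sub_inj hr.le hc hr'.le hc'
  rw [node_eq_ite hr, node_eq_ite hr'] at heq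
  grind

theorem node_inj_of_ne_zero (hr0 : r ≠ 0) (hr : r < h) (hc : (c + 1) * 2 ^ r ≤ 2 ^ h)
    (hr' : r' < h) (hc' : (c' + 1) * 2 ^ r' ≤ 2 ^ h)
    (heq : node h m j i r c = node h m j i' r' c') : i = i' ∧ r = r' ∧ c = c' := by
  have hbits := natToBits_sub_eq_replicate_iff hr.le hc
  have hbits' := natToBits_sub_eq_replicate_iff hr'.le hc'
  have hinj := natToBits_sub_inj hr.le hc hr'.le hc'
  have hlen := length_natToBits (h - r) c
  rw [node_eq_ite hr, node_eq_ite hr'] at heq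
  grind

theorem level_node (hr : r < h) : level (node h m j i r c) = j := by
  rw [node_eq_ite hr]
  split_ifs <;> rfl

theorem node_mem_cell (hr : r < h) : node h m j i r c ∈ cell h d j i (i + 1) := by
  have : i * width h d j ≤ (i + 1) * width h d j := Nat.mul_le_mul_right _ i.le_succ
  have hne := replicate_true_ne_false (show h ≠ 0 by omega)
  refine ⟨(level_node hr).le, ?_⟩
  rw [node_eq_ite hr]
  split_ifs <;> simp only [leftEnd, rightEnd] <;> grind

theorem valid_node (hj : 2 ≤ j) (hjm : j ≤ m) (hi : i < NN h ^ (m - j)) (hr : r ≤ h)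
    (hc : (c + 1) * 2 ^ r ≤ 2 ^ h) : Valid h d m (node h m j i r c) := by
  obtain rfl | hr := hr.eq_or_lt
  · simp [node_self, RootR, Valid, hj.trans hjm]
  have hne := replicate_true_ne_false (show h ≠ 0 by omega)
  have hlen := length_natToBits (h - r) c
  rw [node_eq_ite hr]
  split_ifs <;> simp only [Valid] <;> grind

end Node

section Link

variable {h d m j i a b κ q : ℕ} {u v : Raw}

/-- The graph `G_{h,d,m}`, viewed as a graph on all codes. -/
def codeGraph (h d m : ℕ) : SimpleGraph Raw := (G h d m).spanningCoe

theorem codeGraph_adj : (codeGraph h d m).Adj u v ↔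
    Valid h d m u ∧ Valid h d m v ∧ u ≠ v ∧ (rel h d m u v ∨ rel h d m v u) := by
  simp only [codeGraph, G, map_adj, comap_adj, fromRel_adj, Function.Embedding.subtype_apply]
  constructor
  · rintro ⟨x, y, ⟨hne, hrel⟩, rfl, rfl⟩
    exact ⟨x.2, y.2, hne, hrel⟩
  · rintro ⟨hu, hv, hne, hrel⟩
    exact ⟨⟨u, hu⟩, ⟨v, hv⟩, ⟨hne, hrel⟩, rfl, rfl⟩

/-- The internal vertices of the spines from the leaf `κ` of the `i`-th tree of level `j + 1` to
the `q`-th gluing set of the `i`-th copy of `G_{h,d,j+1}`; all indices are counted from `0`. -/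
def spineVerts (j i κ q : ℕ) : Set Raw :=
  {w | ∃ e s, w = .spine (j + 1) (i + 1) (κ + 1) (q + 1) e s}

theorem spineVerts_subset_cell : spineVerts j i κ q ⊆ cell h d (j + 1) i (i + 1) := by
  rintro _ ⟨e, s, rfl⟩
  exact ⟨le_rfl, le_rfl, le_rfl⟩

/-- The oriented edges of `G_{h,d,m}` that avoid the root. -/
inductive Link (h d m : ℕ) : Raw → Raw → Prop
  | base (k : ℕ) : Link h d m (.path k) (.path (k + 1))
  | tree {j i r c b : ℕ} (hj : 2 ≤ j) (hr : r + 1 < h) (hc : (c + 1) * 2 ^ (r + 1) ≤ 2 ^ h)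
      (hb : b ≤ 1) : Link h d m (node h m j i (r + 1) c) (node h m j i r (2 * c + b))
  | spine {j i κ q : ℕ} {u v : Raw} (hj : 1 ≤ j) (hκ : κ < 2 ^ h) (hq0 : 0 < q) (hq : q < NN h)
      (hκq : q = 2 * κ + 2 ∨ q + 1 = 2 * κ)
      (hu : u = node h m (j + 1) i 0 κ ∨ u ∈ spineVerts j i κ q)
      (hv : v ∈ spineVerts j i κ q ∨ v ∈ segment h d m j (i * NN h + q) (i * NN h + q)) :
      Link h d m u v

theorem link_child {p : List Bool} {b : Bool} (hp : p.length < h)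
    (hv : Valid h d m (canon h m (.tree j i p))) (hroot : canon h m (.tree j i p) ≠ RootR m) :
    Link h d m (canon h m (.tree j i p)) (canon h m (.tree j i (p ++ [b]))) := by
  have hne : p ≠ [] := by
    rintro rfl
    exact hroot rfl
  have hpos := List.length_pos_iff.mpr hne
  have hrep : p ≠ List.replicate h false := by
    rintro rfl
    simp at hp
  simp only [canon, hne, hrep, false_and, if_false, Valid] at hv
  obtain ⟨hj, -, hi, -⟩ := hv
  obtain ⟨c, hc, hcp⟩ := exists_natToBits_eq p
  obtain ⟨i, rfl⟩ : ∃ i', i = i' + 1 := ⟨i - 1, by omega⟩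
  obtain ⟨r, hr⟩ : ∃ r, p.length + r + 1 = h := ⟨h - p.length - 1, by omega⟩
  have hparent : canon h m (.tree j (i + 1) p) = node h m j i (r + 1) c := by
    rw [node, show h - (r + 1) = p.length by omega, hcp]
  have hchild : canon h m (.tree j (i + 1) (p ++ [b])) = node h m j i r (2 * c + b.toNat) := by
    rw [node, show h - r = p.length + 1 by omega, ← natToBits_append, hcp]
  rw [hparent, hchild]
  refine .tree hj (by omega) ?_ b.toNat_le
  calc (c + 1) * 2 ^ (r + 1) ≤ 2 ^ p.length * 2 ^ (r + 1) := Nat.mul_le_mul_right _ hc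
    _ = 2 ^ h := by rw [← pow_add, ← hr, add_assoc]

theorem link_of_spine {k t : ℕ} (hj : 2 ≤ j) (hi : 1 ≤ i) (hk : 1 ≤ k) (hkh : k ≤ 2 ^ h)
    (hkt : t = 2 * k - 2 ∨ t = 2 * k + 1) (ht : 1 ≤ t) (hth : t ≤ 2 ^ (h + 1))
    (hu : u = canon h m (.tree j i (leafPos h k)) ∨ ∃ e s, u = .spine j i k t e s)
    (hv : (∃ e s, v = .spine j i k t e s) ∨
      v ∈ segment h d m (j - 1) ((i - 1) * NN h + t - 1) ((i - 1) * NN h + t - 1)) :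
    Link h d m u v := by
  obtain ⟨j, rfl⟩ : ∃ j', j = j' + 1 := ⟨j - 1, by omega⟩
  obtain ⟨i, rfl⟩ : ∃ i', i = i' + 1 := ⟨i - 1, by omega⟩
  obtain ⟨κ, rfl⟩ : ∃ κ, k = κ + 1 := ⟨k - 1, by omega⟩
  obtain ⟨q, rfl⟩ : ∃ q, t = q + 1 := ⟨t - 1, by omega⟩
  have hN := NN_add_one h
  rw [pow_succ] at hth
  exact .spine (by omega) (by omega) (by omega) (by omega) (by omega) hu hv

theorem link_of_rawAdj (hh : h ≠ 0) {x y : Raw} (hxy : rawAdj h d x y)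
    (hx : Valid h d m (canon h m x)) (hy : Valid h d m (canon h m y))
    (hroot : canon h m x ≠ RootR m) : Link h d m (canon h m x) (canon h m y) := by
  cases hxy with
  | base k => exact .base k
  | child j i p b hp => exact link_child hp hx hroot
  | step j i k t e s =>
    obtain ⟨hj, -, hi, -, hk, hkh, hkt, ht, hth, -⟩ := hx
    exact link_of_spine hj hi hk hkh hkt ht hth (.inr ⟨e, s, rfl⟩) (.inl ⟨e, s + 1, rfl⟩)
  | toLeaf j i k t e =>
    obtain ⟨hj, -, hi, -, hk, hkh, hkt, ht, hth, -⟩ := hy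
    exact link_of_spine hj hi hk hkh hkt ht hth (.inl rfl) (.inl ⟨e, 1, rfl⟩)
  | toV j i k t e =>
    obtain ⟨hj, -, hi, -, hk, hkh, hkt, ht, hth, he, hej, -⟩ := hx
    exact link_of_spine hj hi hk hkh hkt ht hth (.inr ⟨e, d, rfl⟩)
      (.inr (canon_VsetElem_mem_segment hh he hej hy))
  | short j i k t e _ hk hkh hkt ht hth he hej =>
    have hi : 1 ≤ i := by
      by_contra hi
      have hne : leafPos h k ≠ [] := by simp [leafPos, ← List.length_pos_iff, Nat.pos_of_ne_zero hh]
      grind [canon, Valid]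
    exact link_of_spine (by omega) hi hk hkh hkt ht hth (.inl rfl)
      (.inr (canon_VsetElem_mem_segment hh he hej hy))

theorem link_of_adj (hh : h ≠ 0) (huv : (codeGraph h d m).Adj u v) (hu : u ≠ RootR m)
    (hv : v ≠ RootR m) : Link h d m u v ∨ Link h d m v u := by
  obtain ⟨hu', hv', -, ⟨x, y, hxy, rfl, rfl⟩ | ⟨x, y, hxy, rfl, rfl⟩⟩ := codeGraph_adj.mp huv
  · exact .inl (link_of_rawAdj hh hxy hu' hv' hu)
  · exact .inr (link_of_rawAdj hh hxy hv' hu' hv)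

theorem Link.mem_cell (hh : h ≠ 0) (huv : Link h d m u v) :
    (∃ k, u = .path k ∧ v = .path (k + 1)) ∨
      ∃ i, level u ≠ 0 ∧ u ∈ cell h d (level u) i (i + 1) ∧ v ∈ cell h d (level u) i (i + 1) := by
  cases huv with
  | base k => exact .inl ⟨k, rfl, rfl⟩
  | @tree j i r c b hj hr hc hb =>
    rw [level_node hr]
    exact .inr ⟨i, by omega, node_mem_cell hr, node_mem_cell (by omega)⟩
  | @spine j i κ q u v hj hκ hq0 hq hκq hu hv =>
    have hleaf : node h m (j + 1) i 0 κ ∈ cell h d (j + 1) i (i + 1) :=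
      node_mem_cell (Nat.pos_of_ne_zero hh)
    have hu' : level u = j + 1 ∧ u ∈ cell h d (j + 1) i (i + 1) := by
      obtain rfl | hu := hu
      · exact ⟨level_node (Nat.pos_of_ne_zero hh), hleaf⟩
      · obtain ⟨e, s, rfl⟩ := id hu
        exact ⟨rfl, spineVerts_subset_cell hu⟩
    have hv' : v ∈ cell h d (j + 1) i (i + 1) := by
      refine hv.elim (fun hv => spineVerts_subset_cell hv) fun hv => cell_subset_cell_succ hj ?_
      exact cell_mono (by omega) (by rw [add_mul]; omega) hv.1
    rw [hu'.1]
    exact .inr ⟨i, j.succ_ne_zero, hu'.2, hv'⟩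

theorem Link.cut (hh : h ≠ 0) (huv : Link h d m u v) (hu : level u ≤ j) (c : ℕ) :
    (rightEnd h d u ≤ c * width h d j ∧ rightEnd h d v ≤ c * width h d j) ∨
      (c * width h d j ≤ leftEnd h d u ∧ c * width h d j ≤ leftEnd h d v) := by
  obtain ⟨k, rfl, rfl⟩ | ⟨i, hl, hu', hv'⟩ := huv.mem_cell hh
  · simp only [leftEnd, rightEnd]
    omega
  · rw [width_eq_pow_mul hl hu, ← mul_assoc]
    obtain hc | hc := Nat.lt_or_ge i (c * NN h ^ (j - level u))
    · have := Nat.mul_le_mul_right (width h d (level u)) (Nat.succ_le_of_lt hc)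
      exact .inl ⟨hu'.2.2.trans this, hv'.2.2.trans this⟩
    · have := Nat.mul_le_mul_right (width h d (level u)) hc
      exact .inr ⟨this.trans hu'.2.1, this.trans hv'.2.1⟩

theorem segment_cut (hh : h ≠ 0) (huv : (codeGraph h d m).Adj u v)
    (hu : u ∈ segment h d m j a b) (hv : v ∈ segment h d m j a b) (c : ℕ) :
    (u ∈ segment h d m j a c ∧ v ∈ segment h d m j a c) ∨
      (u ∈ segment h d m j c b ∧ v ∈ segment h d m j c b) := by
  have hcut : (rightEnd h d u ≤ c * width h d j ∧ rightEnd h d v ≤ c * width h d j) ∨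
      (c * width h d j ≤ leftEnd h d u ∧ c * width h d j ≤ leftEnd h d v) := by
    obtain huv | hvu := link_of_adj hh huv hu.2.2 hv.2.2
    · exact huv.cut hh hu.1.1 c
    · exact (hvu.cut hh hv.1.1 c).imp And.symm And.symm
  refine hcut.imp (fun hc => ?_) fun hc => ?_
  · exact ⟨⟨⟨hu.1.1, hu.1.2.1, hc.1⟩, hu.2⟩, ⟨⟨hv.1.1, hv.1.2.1, hc.2⟩, hv.2⟩⟩
  · exact ⟨⟨⟨hu.1.1, hc.1, hu.1.2.2⟩, hu.2⟩, ⟨⟨hv.1.1, hc.2, hv.1.2.2⟩, hv.2⟩⟩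

theorem adj_node_child (hj : 2 ≤ j) (hjm : j ≤ m) (hi : i < NN h ^ (m - j)) {r c b : ℕ}
    (hr : r < h) (hc : (c + 1) * 2 ^ (r + 1) ≤ 2 ^ h) (hb : b ≤ 1) :
    (codeGraph h d m).Adj (node h m j i (r + 1) c) (node h m j i r (2 * c + b)) := by
  have hc' : (2 * c + b + 1) * 2 ^ r ≤ 2 ^ h := by
    calc (2 * c + b + 1) * 2 ^ r ≤ ((c + 1) * 2) * 2 ^ r := Nat.mul_le_mul_right _ (by omega)
      _ = (c + 1) * 2 ^ (r + 1) := by rw [mul_assoc, ← pow_succ']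
      _ ≤ 2 ^ h := hc
  have hne : node h m j i (r + 1) c ≠ node h m j i r (2 * c + b) := by
    obtain hr' | hr' : r + 1 = h ∨ r + 1 < h := by omega
    · rw [hr', node_self]
      exact (node_ne_RootR hr).symm
    · exact fun heq => absurd (node_inj hr' hc hr hc' heq).1 (by omega)
  obtain ⟨b, rfl⟩ : ∃ b' : Bool, b = b'.toNat := by
    obtain rfl | rfl : b = 0 ∨ b = 1 := by omega
    exacts [⟨false, rfl⟩, ⟨true, rfl⟩]
  refine codeGraph_adj.mpr
    ⟨valid_node hj hjm hi hr hc, valid_node hj hjm hi hr.le hc', hne, .inl ?_⟩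
  refine ⟨_, _, .child j (i + 1) (natToBits (h - (r + 1)) c) b (by simp; omega), rfl, ?_⟩
  rw [natToBits_append, show h - (r + 1) + 1 = h - r by omega, node]

end Link

section Region

variable {h d m j i r c lo hi a b a' b' κ q : ℕ} {N N' S S' : ℕ → ℕ → Prop} {w : Raw}

/-- The part of the `i`-th copy of `G_{h,d,j+1}` formed by the copies `a, …, b - 1` of `G_{h,d,j}`
in it, the tree vertices `node r c` with `N r c`, and the inner vertices of the spines from the
leaves `κ` to the gluing sets `q` with `S κ q`. -/
def piece (h d m j i a b : ℕ) (N S : ℕ → ℕ → Prop) : Set Raw :=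
  {w | w ∈ segment h d m j (i * NN h + a) (i * NN h + b) ∨
    (∃ r c, N r c ∧ w = node h m (j + 1) i r c) ∨ ∃ κ q, S κ q ∧ w ∈ spineVerts j i κ q}

/-- The part of the `i`-th copy of `G_{h,d,j+1}` spanned by the leaves `lo, …, hi - 1`. -/
def region (h d m j i lo hi : ℕ) : Set Raw :=
  piece h d m j i (2 * lo) (2 * hi - 1)
    (fun r c => r < h ∧ lo ≤ c * 2 ^ r ∧ (c + 1) * 2 ^ r ≤ hi)
    (fun κ q => (q = 2 * κ + 2 ∨ q + 1 = 2 * κ) ∧ lo ≤ κ ∧ κ < hi ∧ 2 * lo ≤ q ∧ q < 2 * hi)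

/-- The spines from the leaf `κ` to the `q`-th gluing set, together with their ends. -/
def bundle (h d m j i κ q : ℕ) : Set Raw :=
  piece h d m j i q q (fun r c => r = 0 ∧ c = κ) (fun κ' q' => κ' = κ ∧ q' = q)

theorem piece_mono (ha : a' ≤ a) (hb : b ≤ b') (hN : ∀ r c, N r c → N' r c)
    (hS : ∀ κ q, S κ q → S' κ q) : piece h d m j i a b N S ⊆ piece h d m j i a' b' N' S' := by
  rintro w (hw | ⟨r, c, hrc, hw⟩ | ⟨κ, q, hκq, hw⟩)
  · exact .inl (segment_mono (by omega) (by omega) hw)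
  · exact .inr (.inl ⟨r, c, hN r c hrc, hw⟩)
  · exact .inr (.inr ⟨κ, q, hS κ q hκq, hw⟩)

theorem mem_segment_of_mem_piece (hN : ∀ r c, N r c → r < h) (hw : w ∈ piece h d m j i a b N S)
    (hl : level w ≤ j) : w ∈ segment h d m j (i * NN h + a) (i * NN h + b) := by
  obtain hw | ⟨r, c, hrc, rfl⟩ | ⟨κ, q, -, e, s, rfl⟩ := hw
  · exact hw
  · rw [level_node (hN r c hrc)] at hl
    omega
  · simp only [level] at hl
    omega

theorem node_notMem_segment (hr : r < h) : node h m (j + 1) i r c ∉ segment h d m j a b :=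
  fun hw => absurd hw.1.1 (by rw [level_node hr]; omega)

theorem node_ne_of_mem_spineVerts (hr : r < h) (hw : w ∈ spineVerts j i κ q) :
    w ≠ node h m a' b' r c := by
  obtain ⟨e, s, rfl⟩ := hw
  rw [node_eq_ite hr]
  split_ifs <;> simp

theorem of_node_mem_piece (hN : ∀ r c, N r c → r < h ∧ (c + 1) * 2 ^ r ≤ 2 ^ h) (hr : r < h)
    (hc : (c + 1) * 2 ^ r ≤ 2 ^ h) (hw : node h m (j + 1) i r c ∈ piece h d m j i a b N S) :
    N r c := by
  obtain hw | ⟨r', c', hrc, heq⟩ | ⟨κ, q, -, hw⟩ := hw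
  · exact (node_notMem_segment hr hw).elim
  · obtain ⟨rfl, rfl⟩ := node_inj hr hc (hN _ _ hrc).1 (hN _ _ hrc).2 heq
    exact hrc
  · exact (node_ne_of_mem_spineVerts hr hw rfl).elim

theorem of_spine_mem_piece (hN : ∀ r c, N r c → r < h) (hw : w ∈ spineVerts j a' κ q)
    (hw' : w ∈ piece h d m j i a b N S) : a' = i ∧ S κ q := by
  obtain hw' | ⟨r, c, hrc, heq⟩ | ⟨κ', q', hS, hw'⟩ := hw'
  · obtain ⟨e, s, rfl⟩ := hw
    have := hw'.1.1
    simp only [level] at this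
    omega
  · exact (node_ne_of_mem_spineVerts (hN r c hrc) hw heq).elim
  · obtain ⟨e, s, rfl⟩ := hw
    obtain ⟨e', s', heq⟩ := hw'
    simp only [Raw.spine.injEq, Nat.add_right_cancel_iff] at heq
    obtain ⟨-, rfl, rfl, rfl, -, -⟩ := heq
    exact ⟨rfl, hS⟩

theorem mem_piece_inter (hN : ∀ r c, N r c → r < h ∧ (c + 1) * 2 ^ r ≤ 2 ^ h)
    (hN' : ∀ r c, N' r c → r < h ∧ (c + 1) * 2 ^ r ≤ 2 ^ h)
    (hw : w ∈ piece h d m j i a b N S) (hw' : w ∈ piece h d m j i a' b' N' S') :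
    (w ∈ segment h d m j (i * NN h + a) (i * NN h + b) ∧
      w ∈ segment h d m j (i * NN h + a') (i * NN h + b')) ∨
    (∃ r c, N r c ∧ N' r c ∧ w = node h m (j + 1) i r c) ∨ ∃ κ q, S κ q ∧ S' κ q := by
  obtain hw | ⟨r, c, hrc, rfl⟩ | ⟨κ, q, hS, hw⟩ := hw
  · exact .inl ⟨hw, mem_segment_of_mem_piece (fun r c hrc => (hN' r c hrc).1) hw' hw.1.1⟩
  · exact .inr (.inl ⟨r, c, hrc, of_node_mem_piece hN' (hN r c hrc).1 (hN r c hrc).2 hw', rfl⟩)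
  · exact .inr (.inr ⟨κ, q, hS, (of_spine_mem_piece (fun r c hrc => (hN' r c hrc).1) hw hw').2⟩)

theorem node_mem_region (hr : r < h) (hlo : lo ≤ c * 2 ^ r) (hhi : (c + 1) * 2 ^ r ≤ hi) :
    node h m (j + 1) i r c ∈ region h d m j i lo hi :=
  .inr (.inl ⟨r, c, ⟨hr, hlo, hhi⟩, rfl⟩)

theorem leaf_mem_region (hh : h ≠ 0) (hlo : lo ≤ κ) (hhi : κ < hi) :
    node h m (j + 1) i 0 κ ∈ region h d m j i lo hi :=
  node_mem_region (Nat.pos_of_ne_zero hh) (by omega) (by omega)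

theorem of_node_mem_region (hhi : hi ≤ 2 ^ h) (hr : r < h) (hc : (c + 1) * 2 ^ r ≤ 2 ^ h)
    (hw : node h m (j + 1) i r c ∈ region h d m j i lo hi) :
    lo ≤ c * 2 ^ r ∧ (c + 1) * 2 ^ r ≤ hi :=
  (of_node_mem_piece (fun _ _ hrc => ⟨hrc.1, hrc.2.2.trans hhi⟩) hr hc hw).2

theorem mem_segment_of_mem_region (hw : w ∈ region h d m j i lo hi) (hl : level w ≤ j) :
    w ∈ segment h d m j (i * NN h + 2 * lo) (i * NN h + (2 * hi - 1)) :=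
  mem_segment_of_mem_piece (fun _ _ hrc => hrc.1) hw hl

theorem level_le_of_mem_region (hw : w ∈ region h d m j i lo hi) : level w ≤ j + 1 := by
  obtain hw | ⟨r, c, ⟨hr, -⟩, rfl⟩ | ⟨κ, q, -, e, s, rfl⟩ := hw
  · exact hw.1.1.trans j.le_succ
  · exact (level_node hr).le
  · exact le_rfl

theorem RootR_notMem_region : RootR m ∉ region h d m j i lo hi := by
  rintro (hw | ⟨r, c, ⟨hr, -⟩, heq⟩ | ⟨κ, q, -, e, s, heq⟩)
  · exact hw.2.2 rfl
  · exact node_ne_RootR hr heq.symm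
  · simp [RootR] at heq

theorem bundle_subset_region (hh : h ≠ 0) (hκq : q = 2 * κ + 2 ∨ q + 1 = 2 * κ) (hlo : lo ≤ κ)
    (hhi : κ < hi) (hqlo : 2 * lo ≤ q) (hqhi : q < 2 * hi) :
    bundle h d m j i κ q ⊆ region h d m j i lo hi := by
  refine piece_mono hqlo (by omega) ?_ ?_
  · rintro _ _ ⟨rfl, rfl⟩
    exact ⟨Nat.pos_of_ne_zero hh, by omega, by omega⟩
  · rintro _ _ ⟨rfl, rfl⟩
    exact ⟨hκq, hlo, hhi, hqlo, hqhi⟩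

end Region

section RegionEdge

variable {h d m j i r c lo hi κ q : ℕ} {u v : Raw}

/-- The possible edges of `region h d m j i lo hi`: those inside a copy of `G_{h,d,j}`, tree edges
and edges of spines. -/
def IsRegionEdge (h d m j i lo hi : ℕ) (u v : Raw) : Prop :=
  (u ∈ segment h d m j (i * NN h + 2 * lo) (i * NN h + (2 * hi - 1)) ∧
    v ∈ segment h d m j (i * NN h + 2 * lo) (i * NN h + (2 * hi - 1))) ∨
  (∃ r c b, r + 1 < h ∧ lo ≤ c * 2 ^ (r + 1) ∧ (c + 1) * 2 ^ (r + 1) ≤ hi ∧ b ≤ 1 ∧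
    s(u, v) = s(node h m (j + 1) i (r + 1) c, node h m (j + 1) i r (2 * c + b))) ∨
  ∃ κ q, (q = 2 * κ + 2 ∨ q + 1 = 2 * κ) ∧ lo ≤ κ ∧ κ < hi ∧ 2 * lo ≤ q ∧ q < 2 * hi ∧
    u ∈ bundle h d m j i κ q ∧ v ∈ bundle h d m j i κ q

theorem IsRegionEdge.symm (he : IsRegionEdge h d m j i lo hi u v) :
    IsRegionEdge h d m j i lo hi v u := by
  obtain ⟨hu, hv⟩ | ⟨r, c, b, hr, hlo, hhi, hb, huv⟩ |
    ⟨κ, q, hκq, hlo, hhi, hqlo, hqhi, hu, hv⟩ := he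
  · exact .inl ⟨hv, hu⟩
  · exact .inr (.inl ⟨r, c, b, hr, hlo, hhi, hb, Sym2.eq_swap.trans huv⟩)
  · exact .inr (.inr ⟨κ, q, hκq, hlo, hhi, hqlo, hqhi, hv, hu⟩)

theorem isRegionEdge_of_level_le (hu : u ∈ region h d m j i lo hi) (hv : v ∈ region h d m j i lo hi)
    (hlu : level u ≤ j) (hlv : level v ≤ j) : IsRegionEdge h d m j i lo hi u v :=
  .inl ⟨mem_segment_of_mem_region hu hlu, mem_segment_of_mem_region hv hlv⟩

theorem isRegionEdge_of_tree {i' b : ℕ} (hhi : hi ≤ 2 ^ h) (hr : r + 1 < h)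
    (hc : (c + 1) * 2 ^ (r + 1) ≤ 2 ^ h) (hb : b ≤ 1)
    (hu : node h m (j + 1) i' (r + 1) c ∈ region h d m j i lo hi) :
    IsRegionEdge h d m j i lo hi (node h m (j + 1) i' (r + 1) c)
      (node h m (j + 1) i' r (2 * c + b)) := by
  obtain hu | ⟨r', c', ⟨hr', hlo', hhi'⟩, heq⟩ | ⟨κ, q, -, hu⟩ := hu
  · exact (node_notMem_segment hr hu).elim
  · obtain ⟨rfl, rfl, rfl⟩ :=
      node_inj_of_ne_zero r.succ_ne_zero hr hc hr' (hhi'.trans hhi) heq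
    exact .inr (.inl ⟨r, c, b, hr, hlo', hhi', hb, rfl⟩)
  · exact (node_ne_of_mem_spineVerts hr hu rfl).elim

theorem copy_eq_of_mem_region (hh : h ≠ 0) (hhi : hi ≤ 2 ^ h) {i' : ℕ} (hq0 : 0 < q)
    (hq : q < NN h) (hv : v ∈ segment h d m j (i' * NN h + q) (i' * NN h + q))
    (hv' : v ∈ region h d m j i lo hi) : i' = i ∧ 2 * lo ≤ q ∧ q < 2 * hi := by
  have hv'' := mem_segment_of_mem_region hv' hv.1.1
  have hle := le_of_mem_segment hh hv hv''
  have hge := le_of_mem_segment hh hv'' hv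
  have hN := NN_add_one h
  have h1 : i < i' + 1 := Nat.lt_of_mul_lt_mul_right (a := NN h) (by rw [add_mul]; omega)
  have h2 : i' < i + 1 := Nat.lt_of_mul_lt_mul_right (a := NN h) (by rw [add_mul]; omega)
  obtain rfl : i' = i := by omega
  exact ⟨rfl, by omega, by omega⟩

theorem isRegionEdge_of_spine {i' : ℕ} (hh : h ≠ 0) (hhi : hi ≤ 2 ^ h) (hκ : κ < 2 ^ h)
    (hq0 : 0 < q) (hq : q < NN h) (hκq : q = 2 * κ + 2 ∨ q + 1 = 2 * κ)
    (hu : u = node h m (j + 1) i' 0 κ ∨ u ∈ spineVerts j i' κ q)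
    (hv : v ∈ spineVerts j i' κ q ∨ v ∈ segment h d m j (i' * NN h + q) (i' * NN h + q))
    (hu' : u ∈ region h d m j i lo hi) (hv' : v ∈ region h d m j i lo hi) :
    IsRegionEdge h d m j i lo hi u v := by
  have hrange : i' = i ∧ lo ≤ κ ∧ κ < hi ∧ 2 * lo ≤ q ∧ q < 2 * hi := by
    have of_spine {w : Raw} (hw : w ∈ spineVerts j i' κ q) (hw' : w ∈ region h d m j i lo hi) :=
      of_spine_mem_piece (fun _ _ hrc => hrc.1) hw hw'
    obtain hv | hv := hv
    · exact (of_spine hv hv').imp_right And.right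
    obtain rfl | hu := hu
    · obtain ⟨rfl, hqlo, hqhi⟩ := copy_eq_of_mem_region hh hhi hq0 hq hv hv'
      have := of_node_mem_region hhi (Nat.pos_of_ne_zero hh) (by omega) hu'
      exact ⟨rfl, by omega, by omega, hqlo, hqhi⟩
    · exact (of_spine hu hu').imp_right And.right
  obtain ⟨rfl, hlo, hhi, hqlo, hqhi⟩ := hrange
  refine .inr (.inr ⟨κ, q, hκq, hlo, hhi, hqlo, hqhi, ?_, ?_⟩)
  · exact hu.elim (fun hu => .inr (.inl ⟨0, κ, ⟨rfl, rfl⟩, hu⟩))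
      fun hu => .inr (.inr ⟨κ, q, ⟨rfl, rfl⟩, hu⟩)
  · exact hv.elim (fun hv => .inr (.inr ⟨κ, q, ⟨rfl, rfl⟩, hv⟩)) .inl

theorem Link.isRegionEdge (hh : h ≠ 0) (hj : 1 ≤ j) (hhi : hi ≤ 2 ^ h) (huv : Link h d m u v)
    (hu : u ∈ region h d m j i lo hi) (hv : v ∈ region h d m j i lo hi) :
    IsRegionEdge h d m j i lo hi u v := by
  have hlu := level_le_of_mem_region hu
  cases huv with
  | base k => exact isRegionEdge_of_level_le hu hv hj hj
  | @tree j' i' r c b hj' hr hc hb =>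
    rw [level_node hr] at hlu
    obtain hlt | rfl : j' ≤ j ∨ j' = j + 1 := by omega
    · exact isRegionEdge_of_level_le hu hv (by rwa [level_node hr])
        (by rwa [level_node (by omega)])
    · exact isRegionEdge_of_tree hhi hr hc hb hu
  | @spine j' i' κ q u v hj' hκ hq0 hq hκq hu' hv' =>
    have hlevel : level u = j' + 1 := by
      obtain rfl | ⟨e, s, rfl⟩ := hu'
      exacts [level_node (Nat.pos_of_ne_zero hh), rfl]
    obtain hlt | rfl : j' < j ∨ j' = j := by omega
    · refine isRegionEdge_of_level_le hu hv (by omega) ?_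
      obtain ⟨e, s, rfl⟩ | hv' := hv'
      exacts [hlt, hv'.1.1.trans hlt.le]
    · exact isRegionEdge_of_spine hh hhi hκ hq0 hq hκq hu' hv' hu hv

theorem isRegionEdge_of_adj (hh : h ≠ 0) (hj : 1 ≤ j) (hhi : hi ≤ 2 ^ h)
    (huv : (codeGraph h d m).Adj u v) (hu : u ∈ region h d m j i lo hi)
    (hv : v ∈ region h d m j i lo hi) : IsRegionEdge h d m j i lo hi u v := by
  have hroot : RootR m ∉ region h d m j i lo hi := RootR_notMem_region
  obtain huv | hvu := link_of_adj hh huv (ne_of_mem_of_not_mem hu hroot)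
    (ne_of_mem_of_not_mem hv hroot)
  · exact huv.isRegionEdge hh hj hhi hu hv
  · exact (hvu.isRegionEdge hh hj hhi hv hu).symm

end RegionEdge

section Leaf

variable {h d m j i a : ℕ}

theorem not_adj_leaf (hh : h ≠ 0) (hj : 1 ≤ j) (ha : a < 2 ^ h) {w : Raw}
    (hw : w ∈ region h d m j i a (a + 1)) :
    ¬ (codeGraph h d m).Adj w (node h m (j + 1) i 0 a) := by
  intro hadj
  obtain ⟨-, hleaf⟩ | ⟨r, c, b, -, hlo, hhi, -⟩ | ⟨κ, q, hκq, hlo, hhi, hqlo, hqhi, -⟩ :=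
    isRegionEdge_of_adj hh hj ha hadj hw (leaf_mem_region hh le_rfl a.lt_succ_self)
  · exact node_notMem_segment (Nat.pos_of_ne_zero hh) hleaf
  · rw [add_mul, one_mul] at hhi
    have := Nat.one_lt_two_pow r.succ_ne_zero
    omega
  · omega

theorem region_leaf_diff_subset : region h d m j i a (a + 1) \ {node h m (j + 1) i 0 a} ⊆
    segment h d m j (i * NN h + 2 * a) (i * NN h + 2 * a + 1) := by
  rintro w ⟨hw | ⟨r, c, ⟨-, hlo, hhi⟩, rfl⟩ | ⟨κ, q, hκq, -⟩, hne⟩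
  · exact hw
  · rw [add_mul, one_mul] at hhi
    have hr : 2 ^ r ≤ 1 := by omega
    obtain rfl : r = 0 := by
      by_contra hr0
      have := Nat.one_lt_two_pow hr0
      omega
    obtain rfl : c = a := by omega
    exact (hne rfl).elim
  · omega

end Leaf

section Guard

variable {h d m j i r a lo mid hi : ℕ} {u v : Raw}

theorem dyadic_cut {r a s c : ℕ} (hlo : a * 2 ^ (r + 1) ≤ c * 2 ^ s)
    (hhi : (c + 1) * 2 ^ s ≤ (a + 1) * 2 ^ (r + 1)) (hne : ¬ (s = r + 1 ∧ c = a)) :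
    (c + 1) * 2 ^ s ≤ (2 * a + 1) * 2 ^ r ∨ (2 * a + 1) * 2 ^ r ≤ c * 2 ^ s := by
  obtain hs | hs := Nat.lt_or_ge r s
  · obtain ⟨k, rfl⟩ := Nat.exists_eq_add_of_le (Nat.succ_le_of_lt hs)
    have hpow : 2 ^ (r.succ + k) = 2 ^ k * 2 ^ (r + 1) := by rw [← pow_add, add_comm]
    rw [hpow, ← mul_assoc] at hlo hhi
    have hlo' := Nat.le_of_mul_le_mul_right hlo (by positivity)
    have hhi' := Nat.le_of_mul_le_mul_right hhi (by positivity)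
    rw [add_mul, one_mul] at hhi'
    obtain rfl : k = 0 := by
      by_contra hk
      have := Nat.one_lt_two_pow hk
      omega
    exact (hne ⟨rfl, by omega⟩).elim
  · obtain ⟨k, rfl⟩ := Nat.exists_eq_add_of_le hs
    rw [show 2 ^ (s + k) = 2 ^ k * 2 ^ s by rw [← pow_add, add_comm], ← mul_assoc]
    obtain hc | hc := Nat.lt_or_ge c ((2 * a + 1) * 2 ^ k)
    · exact .inl (Nat.mul_le_mul_right _ hc)
    · exact .inr (Nat.mul_le_mul_right _ hc)

theorem tree_edge_mem_region {c b : ℕ} (hr : r + 1 < h) (hlo : lo ≤ c * 2 ^ (r + 1))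
    (hhi : (c + 1) * 2 ^ (r + 1) ≤ hi) (hb : b ≤ 1)
    (huv : s(u, v) = s(node h m (j + 1) i (r + 1) c, node h m (j + 1) i r (2 * c + b))) :
    u ∈ region h d m j i lo hi ∧ v ∈ region h d m j i lo hi := by
  have hparent : node h m (j + 1) i (r + 1) c ∈ region h d m j i lo hi :=
    node_mem_region hr hlo hhi
  have hchild : node h m (j + 1) i r (2 * c + b) ∈ region h d m j i lo hi := by
    rw [pow_succ', ← mul_assoc] at hlo hhi
    refine node_mem_region (by omega) (hlo.trans ?_) (le_trans ?_ hhi)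
    · exact Nat.mul_le_mul_right _ (by omega)
    · exact Nat.mul_le_mul_right _ (by omega)
  obtain ⟨rfl, rfl⟩ | ⟨rfl, rfl⟩ := Sym2.eq_iff.mp huv
  exacts [⟨hparent, hchild⟩, ⟨hchild, hparent⟩]

theorem IsRegionEdge.cut (hh : h ≠ 0) (hlo : lo < mid) (hhi : mid < hi)
    (huv : (codeGraph h d m).Adj u v) (he : IsRegionEdge h d m j i lo hi u v)
    (htree : ∀ r c, lo ≤ c * 2 ^ (r + 1) → (c + 1) * 2 ^ (r + 1) ≤ hi →
      node h m (j + 1) i (r + 1) c ∈ s(u, v) →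
      (c + 1) * 2 ^ (r + 1) ≤ mid ∨ mid ≤ c * 2 ^ (r + 1)) :
    (u ∈ region h d m j i lo mid ∧ v ∈ region h d m j i lo mid) ∨
    (u ∈ region h d m j i mid hi ∧ v ∈ region h d m j i mid hi) ∨
    (u ∈ segment h d m j (i * NN h + (2 * mid - 1)) (i * NN h + 2 * mid) ∧
      v ∈ segment h d m j (i * NN h + (2 * mid - 1)) (i * NN h + 2 * mid)) ∨
    (u ∈ bundle h d m j i (mid - 1) (2 * mid) ∧ v ∈ bundle h d m j i (mid - 1) (2 * mid)) ∨
    (u ∈ bundle h d m j i mid (2 * mid - 1) ∧ v ∈ bundle h d m j i mid (2 * mid - 1)) := by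
  obtain ⟨hu, hv⟩ | ⟨r, c, b, hr, hclo, hchi, hb, hrc⟩ |
    ⟨κ, q, hκq, hκlo, hκhi, hqlo, hqhi, hu, hv⟩ := he
  · obtain hl | ⟨hu, hv⟩ := segment_cut hh huv hu hv (i * NN h + (2 * mid - 1))
    · exact .inl (hl.imp .inl .inl)
    obtain hm | hr := segment_cut hh huv hu hv (i * NN h + 2 * mid)
    · exact .inr (.inr (.inl hm))
    · exact .inr (.inl (hr.imp .inl .inl))
  · obtain hc | hc := htree r c hclo hchi (hrc ▸ Sym2.mem_mk_left _ _)
    · exact .inl (tree_edge_mem_region hr hclo hc hb hrc)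
    · exact .inr (.inl (tree_edge_mem_region hr hc hchi hb hrc))
  · obtain hl | hr | ⟨rfl, rfl⟩ | ⟨rfl, rfl⟩ : (κ < mid ∧ q < 2 * mid) ∨ (mid ≤ κ ∧ 2 * mid ≤ q) ∨
        (κ = mid - 1 ∧ q = 2 * mid) ∨ (κ = mid ∧ q = 2 * mid - 1) := by omega
    · have hsub : bundle h d m j i κ q ⊆ region h d m j i lo mid :=
        bundle_subset_region hh hκq hκlo hl.1 hqlo hl.2
      exact .inl ⟨hsub hu, hsub hv⟩
    · have hsub : bundle h d m j i κ q ⊆ region h d m j i mid hi :=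
        bundle_subset_region hh hκq hr.1 hκhi hr.2 hqhi
      exact .inr (.inl ⟨hsub hu, hsub hv⟩)
    · exact .inr (.inr (.inr (.inl ⟨hu, hv⟩)))
    · exact .inr (.inr (.inr (.inr ⟨hu, hv⟩)))

theorem eq_child_of_adj_apex (hh : h ≠ 0) (hj : 1 ≤ j) (ha : (a + 1) * 2 ^ (r + 1) ≤ 2 ^ h)
    (hr : r + 1 < h) (hv : v ∈ region h d m j i (a * 2 ^ (r + 1)) ((a + 1) * 2 ^ (r + 1)))
    (hadj : (codeGraph h d m).Adj v (node h m (j + 1) i (r + 1) a)) :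
    v = node h m (j + 1) i r (2 * a) ∨ v = node h m (j + 1) i r (2 * a + 1) := by
  obtain ⟨-, hx⟩ | ⟨r', c, b, hr', hlo, hhi, hb, hrc⟩ | ⟨κ, q, -, -, hκ, -, -, -, hx⟩ :=
    isRegionEdge_of_adj hh hj ha hadj hv (node_mem_region hr le_rfl le_rfl)
  · exact (node_notMem_segment hr hx).elim
  · obtain ⟨-, heq⟩ | ⟨rfl, heq⟩ := Sym2.eq_iff.mp hrc
    · have hc : (2 * c + b + 1) * 2 ^ r' ≤ 2 ^ h := by
        rw [pow_succ', ← mul_assoc] at hhi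
        exact (Nat.mul_le_mul_right _ (by omega)).trans (hhi.trans ha)
      obtain ⟨rfl, -⟩ := node_inj hr ha (by omega) hc heq
      have := Nat.pow_lt_pow_right one_lt_two (show r + 1 < r + 1 + 1 by omega)
      simp only [add_mul, one_mul] at hhi
      omega
    · obtain ⟨heq, rfl⟩ := node_inj hr ha hr' (hhi.trans ha) heq
      obtain rfl : r = r' := by omega
      obtain rfl | rfl : b = 0 ∨ b = 1 := by omega
      exacts [.inl rfl, .inr rfl]
  · have h0 := Nat.pos_of_ne_zero hh
    have := of_node_mem_piece
      (by rintro _ _ ⟨rfl, rfl⟩; exact ⟨h0, by rw [pow_zero]; omega⟩) hr ha hx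
    omega

theorem region_disjoint (hh : h ≠ 0) (hmid : 0 < mid) (hmid' : mid ≤ 2 ^ h) (hhi : hi ≤ 2 ^ h)
    (hu : u ∈ region h d m j i lo mid) : u ∉ region h d m j i mid hi := by
  intro hu'
  obtain ⟨hl, hr⟩ | ⟨r, c, hl, hr, -⟩ | ⟨κ, q, hl, hr⟩ :=
    mem_piece_inter (fun _ _ hrc => ⟨hrc.1, hrc.2.2.trans hmid'⟩)
      (fun _ _ hrc => ⟨hrc.1, hrc.2.2.trans hhi⟩) hu hu'
  · have := le_of_mem_segment hh hr hl
    omega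
  · have := hl.2.2
    rw [add_mul, one_mul] at this
    have := Nat.two_pow_pos r
    omega
  · omega

theorem mem_segment_of_mem_bundle {κ q : ℕ} (hh : h ≠ 0) (hu : u ∈ bundle h d m j i κ q)
    (hl : level u ≤ j) : u ∈ segment h d m j (i * NN h + q) (i * NN h + q) :=
  mem_segment_of_mem_piece (by rintro _ _ ⟨rfl, -⟩; exact Nat.pos_of_ne_zero hh) hu hl

theorem mem_bundle_inter_region {κ q : ℕ} (hh : h ≠ 0) (hhi : hi ≤ 2 ^ h) (hκ : κ < 2 ^ h)
    (hu : u ∈ bundle h d m j i κ q) (hu' : u ∈ region h d m j i lo hi) :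
    (u ∈ segment h d m j (i * NN h + q) (i * NN h + q) ∧ 2 * lo ≤ q ∧ q ≤ 2 * hi - 1) ∨
    (lo ≤ κ ∧ κ < hi ∧ (u = node h m (j + 1) i 0 κ ∨ 2 * lo ≤ q ∧ q < 2 * hi)) := by
  obtain ⟨hl, hr⟩ | ⟨_, _, ⟨rfl, rfl⟩, hr, rfl⟩ | ⟨_, _, ⟨rfl, rfl⟩, hr⟩ :=
    mem_piece_inter (by
      rintro _ _ ⟨rfl, rfl⟩
      exact ⟨Nat.pos_of_ne_zero hh, by omega⟩) (fun _ _ hrc => ⟨hrc.1, hrc.2.2.trans hhi⟩) hu hu'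
  · have := le_of_mem_segment hh hr hl
    have := le_of_mem_segment hh hl hr
    exact .inl ⟨hl, by omega, by omega⟩
  · exact .inr ⟨by omega, by omega, .inl rfl⟩
  · exact .inr ⟨hr.2.1, hr.2.2.1, .inr hr.2.2.2⟩

theorem eq_leaf_of_mem_bundle_inter_region {κ q : ℕ} (hh : h ≠ 0) (hhi : hi ≤ 2 ^ h) (hlt : lo < hi)
    (hκ : κ < 2 ^ h) (hq : q < 2 * lo ∨ 2 * hi ≤ q) (hu : u ∈ bundle h d m j i κ q)
    (hu' : u ∈ region h d m j i lo hi) : u = node h m (j + 1) i 0 κ := by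
  obtain ⟨-, hlo, hhi⟩ | ⟨-, -, hu | ⟨hlo, hhi⟩⟩ := mem_bundle_inter_region hh hhi hκ hu hu'
  exacts [by omega, hu, by omega]

theorem mem_segment_of_mem_bundle_inter_region {κ q : ℕ} (hh : h ≠ 0) (hhi : hi ≤ 2 ^ h)
    (hκ : κ < 2 ^ h) (hκ' : κ < lo ∨ hi ≤ κ) (hu : u ∈ bundle h d m j i κ q)
    (hu' : u ∈ region h d m j i lo hi) :
    u ∈ segment h d m j (i * NN h + q) (i * NN h + q) := by
  obtain ⟨hu, -, -⟩ | ⟨hlo, hhi, -⟩ := mem_bundle_inter_region hh hhi hκ hu hu'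
  exacts [hu, by omega]

theorem bundle_disjoint {κ q κ' q' : ℕ} (hh : h ≠ 0) (hκ : κ < 2 ^ h) (hκ' : κ' < 2 ^ h)
    (hne : κ ≠ κ') (hlt : q' < q) (hu : u ∈ bundle h d m j i κ q) :
    u ∉ bundle h d m j i κ' q' := by
  intro hu'
  have hN {κ : ℕ} (hκ : κ < 2 ^ h) (r c : ℕ) (hrc : r = 0 ∧ c = κ) :
      r < h ∧ (c + 1) * 2 ^ r ≤ 2 ^ h := by
    obtain ⟨rfl, rfl⟩ := hrc
    exact ⟨Nat.pos_of_ne_zero hh, by omega⟩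
  obtain ⟨hl, hr⟩ | ⟨_, _, hl, hr, -⟩ | ⟨_, _, hl, hr⟩ :=
    mem_piece_inter (hN hκ) (hN hκ') hu hu'
  · have := le_of_mem_segment hh hl hr
    omega
  · exact hne (hl.2.symm.trans hr.2)
  · exact hne (hl.1.symm.trans hr.1)

theorem of_apex_mem_region (hr : r < h) (ha : (a + 1) * 2 ^ (r + 1) ≤ 2 ^ h) (hhi : hi ≤ 2 ^ h)
    (hx : node h m (j + 1) i (r + 1) a ∈ region h d m j i lo hi) :
    r + 1 < h ∧ lo ≤ a * 2 ^ (r + 1) ∧ (a + 1) * 2 ^ (r + 1) ≤ hi := by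
  have hr' : r + 1 < h := by
    refine lt_of_le_of_ne hr fun heq => ?_
    rw [heq, node_self] at hx
    exact RootR_notMem_region hx
  exact ⟨hr', of_node_mem_region hhi hr' ha hx⟩

theorem dyadic_cut_of_ne_apex {s c : ℕ}
    (hlo : a * 2 ^ (r + 1) ≤ c * 2 ^ (s + 1))
    (hhi : (c + 1) * 2 ^ (s + 1) ≤ (a + 1) * 2 ^ (r + 1))
    (hu : u ≠ node h m (j + 1) i (r + 1) a) (hv : v ≠ node h m (j + 1) i (r + 1) a)
    (hc : node h m (j + 1) i (s + 1) c ∈ s(u, v)) :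
    (c + 1) * 2 ^ (s + 1) ≤ (2 * a + 1) * 2 ^ r ∨ (2 * a + 1) * 2 ^ r ≤ c * 2 ^ (s + 1) := by
  refine dyadic_cut hlo hhi ?_
  rintro ⟨hs, rfl⟩
  rw [hs, Sym2.mem_iff] at hc
  exact hc.elim hu.symm hv.symm

theorem split_region (hh : h ≠ 0) (hj : 1 ≤ j) (hjm : j + 1 ≤ m) (hi' : i < NN h ^ (m - (j + 1)))
    (hr : r < h) (ha : (a + 1) * 2 ^ (r + 1) ≤ 2 ^ h) (hlo : lo = a * 2 ^ (r + 1))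
    (hmid : mid = (2 * a + 1) * 2 ^ r) (hhi : hi = (a + 1) * 2 ^ (r + 1)) :
    Split (codeGraph h d m) (region h d m j i lo hi) (region h d m j i lo mid)
      (region h d m j i mid hi) (segment h d m j (i * NN h + (2 * mid - 1)) (i * NN h + 2 * mid))
      (bundle h d m j i (mid - 1) (2 * mid)) (bundle h d m j i mid (2 * mid - 1))
      (node h m (j + 1) i (r + 1) a) (node h m (j + 1) i r (2 * a))
      (node h m (j + 1) i r (2 * a + 1)) (node h m (j + 1) i 0 (mid - 1))
      (node h m (j + 1) i 0 mid) := by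
  have hpow := Nat.two_pow_pos r
  have hmid_eq : mid = lo + 2 ^ r := by rw [hmid, hlo]; ring
  have hhi_eq : hi = mid + 2 ^ r := by rw [hmid, hhi]; ring
  have hhi_le : hi ≤ 2 ^ h := hhi ▸ ha
  exact
  { edge u hu v hv hux hvx huv :=
      (isRegionEdge_of_adj hh hj hhi_le huv hu hv).cut hh (by omega) (by omega) huv
        fun s c hs hs' hc =>
          hmid ▸ dyadic_cut_of_ne_apex (hlo ▸ hs) (hhi ▸ hs') hux hvx hc
    apex_edge hx v hv hvx := by
      subst hlo hhi
      exact eq_child_of_adj_apex hh hj ha (of_apex_mem_region hr ha hhi_le hx).1 hv hvx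
    adj_left := adj_node_child (by omega) hjm hi' hr ha zero_le_one
    adj_right := adj_node_child (by omega) hjm hi' hr ha le_rfl
    left_mem := node_mem_region hr (by rw [hlo]; exact le_of_eq (by ring)) hmid.ge
    right_mem := node_mem_region hr hmid.le (by rw [hhi]; exact le_of_eq (by ring))
    apex_notMem_left hx := by
      have := of_apex_mem_region hr ha (by omega) hx
      omega
    apex_notMem_right hx := by
      have := of_apex_mem_region hr ha hhi_le hx
      omega
    disjoint u hu := region_disjoint hh (by omega) (by omega) hhi_le hu
    crossing_disjoint u := bundle_disjoint hh (by omega) (by omega) (by omega) (by omega)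
    Kl_inter_Vl u :=
      eq_leaf_of_mem_bundle_inter_region hh (by omega) (by omega) (by omega) (by omega)
    Kl_inter_Vr u hu hu' := segment_mono (by omega) le_rfl
      (mem_segment_of_mem_bundle_inter_region hh hhi_le (by omega) (by omega) hu hu')
    Kl_inter_Vm u hu hu' :=
      .inl (segment_mono le_rfl (by omega) (mem_segment_of_mem_bundle hh hu hu'.1.1))
    Kr_inter_Vr u :=
      eq_leaf_of_mem_bundle_inter_region hh hhi_le (by omega) (by omega) (by omega)
    Kr_inter_Vl u hu hu' := segment_mono le_rfl (by omega)
      (mem_segment_of_mem_bundle_inter_region hh (by omega) (by omega) (by omega) hu hu')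
    Kr_inter_Vm u hu hu' :=
      .inl (segment_mono (by omega) le_rfl (mem_segment_of_mem_bundle hh hu hu'.1.1)) }

end Guard

section Crossing

variable {h d m j i r a : ℕ}

/-- No copy of `G_{h,d,j}` in `G_{h,d,m}` has two remote crossings that avoid the root. -/
def CopiesNotDoublyCrossed (h d m j : ℕ) : Prop :=
  ∀ i < NN h ^ (m - j), NotDoublyCrossed (codeGraph h d m) (segment h d m j i (i + 1))
    (segment h d m j i i) (segment h d m j (i + 1) (i + 1))

/-- The `a`-th vertex at height `r` of the `i`-th tree of level `j + 1` guards the crossings of the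
region below it. -/
def NodeGuards (h d m j i r a : ℕ) : Prop :=
  GuardsBoth (codeGraph h d m) (region h d m j i (a * 2 ^ r) ((a + 1) * 2 ^ r))
    (node h m (j + 1) i r a)
    (node h m (j + 1) i 0 (a * 2 ^ r))
    (segment h d m j (i * NN h + 2 * (a * 2 ^ r)) (i * NN h + 2 * (a * 2 ^ r)))
    (node h m (j + 1) i 0 ((a + 1) * 2 ^ r - 1))
    (segment h d m j (i * NN h + (2 * ((a + 1) * 2 ^ r) - 1))
      (i * NN h + (2 * ((a + 1) * 2 ^ r) - 1)))

theorem mul_NN_add_lt {q : ℕ} (hjm : j + 1 ≤ m) (hi : i < NN h ^ (m - (j + 1))) (hq : q < NN h) :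
    i * NN h + q < NN h ^ (m - j) := by
  calc i * NN h + q < (i + 1) * NN h := by rw [add_mul, one_mul]; omega
    _ ≤ NN h ^ (m - (j + 1)) * NN h := Nat.mul_le_mul_right _ hi
    _ = NN h ^ (m - j) := by rw [← pow_succ]; congr 1; omega

theorem nodeGuards_zero (hh : h ≠ 0) (hj : 1 ≤ j) (hjm : j + 1 ≤ m)
    (hi : i < NN h ^ (m - (j + 1))) (hcross : CopiesNotDoublyCrossed h d m j) (ha : a < 2 ^ h) :
    NodeGuards h d m j i 0 a := by
  have h0 : 0 < h := Nat.pos_of_ne_zero hh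
  have hN := NN_add_one h
  unfold NodeGuards
  simp only [pow_zero, mul_one, Nat.add_sub_cancel]
  rw [show i * NN h + (2 * (a + 1) - 1) = i * NN h + 2 * a + 1 by omega]
  exact .of_isolated
    ((hcross _ (mul_NN_add_lt hjm hi (by omega))).anti region_leaf_diff_subset subset_rfl
      subset_rfl)
    (node_notMem_segment h0) (node_notMem_segment h0) fun w hw => not_adj_leaf hh hj ha hw

theorem nodeGuards_succ (hh : h ≠ 0) (hj : 1 ≤ j) (hjm : j + 1 ≤ m)
    (hi : i < NN h ^ (m - (j + 1))) (hcross : CopiesNotDoublyCrossed h d m j) (hr : r < h)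
    (ha : (a + 1) * 2 ^ (r + 1) ≤ 2 ^ h) (hl : NodeGuards h d m j i r (2 * a))
    (ht : NodeGuards h d m j i r (2 * a + 1)) : NodeGuards h d m j i (r + 1) a := by
  obtain ⟨lo, hlo⟩ : ∃ lo, lo = a * 2 ^ (r + 1) := ⟨_, rfl⟩
  obtain ⟨mid, hmid⟩ : ∃ mid, mid = (2 * a + 1) * 2 ^ r := ⟨_, rfl⟩
  obtain ⟨top, htop⟩ : ∃ top, top = (a + 1) * 2 ^ (r + 1) := ⟨_, rfl⟩
  have hN := NN_add_one h
  have hpow := Nat.two_pow_pos r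
  have hmid_eq : mid = lo + 2 ^ r := by rw [hmid, hlo]; ring
  have htop_eq : top = mid + 2 ^ r := by rw [hmid, htop]; ring
  unfold NodeGuards at hl ht ⊢
  rw [← hmid, show 2 * a * 2 ^ r = lo by rw [hlo]; ring] at hl
  rw [← hmid, show (2 * a + 1 + 1) * 2 ^ r = top by rw [htop]; ring] at ht
  rw [← hlo, ← htop]
  have hleft : region h d m j i lo mid ∩
      segment h d m j (i * NN h + (2 * mid - 1)) (i * NN h + 2 * mid) ⊆
      segment h d m j (i * NN h + (2 * mid - 1)) (i * NN h + (2 * mid - 1)) := fun w hw =>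
    mem_segment_of_mem hw.2 (mem_segment_of_mem_region hw.1 hw.2.1.1)
  have hright : region h d m j i mid top ∩
      segment h d m j (i * NN h + (2 * mid - 1)) (i * NN h + 2 * mid) ⊆
      segment h d m j (i * NN h + 2 * mid) (i * NN h + 2 * mid) := fun w hw =>
    mem_segment_of_mem (mem_segment_of_mem_region hw.1 hw.2.1.1) hw.2
  have hmiddle := hcross _ (mul_NN_add_lt (q := 2 * mid - 1) hjm hi (by omega))
  rw [show i * NN h + (2 * mid - 1) + 1 = i * NN h + 2 * mid by omega] at hmiddle
  refine .of_split (split_region hh hj hjm hi hr ha hlo hmid htop) (hl.anti subset_rfl hleft)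
    (ht.anti hright subset_rfl) (hmiddle.anti subset_rfl hleft hright) ?_ ?_
  · exact Set.insert_subset (leaf_mem_region hh le_rfl (by omega)) fun w hw =>
      .inl (segment_mono le_rfl (by omega) hw)
  · exact Set.insert_subset (leaf_mem_region hh (by omega) (by omega)) fun w hw =>
      .inl (segment_mono (by omega) le_rfl hw)

theorem nodeGuards (hh : h ≠ 0) (hj : 1 ≤ j) (hjm : j + 1 ≤ m) (hi : i < NN h ^ (m - (j + 1)))
    (hcross : CopiesNotDoublyCrossed h d m j) (hr : r ≤ h) (ha : (a + 1) * 2 ^ r ≤ 2 ^ h) :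
    NodeGuards h d m j i r a := by
  induction r generalizing a with
  | zero => exact nodeGuards_zero hh hj hjm hi hcross (by omega)
  | succ r ih =>
    have hle : (2 * a + 1 + 1) * 2 ^ r ≤ 2 ^ h := le_trans (le_of_eq (by ring)) ha
    exact nodeGuards_succ hh hj hjm hi hcross hr ha
      (ih (by omega) (le_trans (Nat.mul_le_mul_right _ (by omega)) hle)) (ih (by omega) hle)

end Crossing

section Copies

variable {h d m j i k : ℕ} {p : List Bool} {w : Raw}

theorem tree_replicate_true_eq_node (hh : h ≠ 0) (hi : i ≠ 0) :
    .tree j i (List.replicate h true) = node h m j i 0 0 := by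
  rw [node_eq_ite (Nat.pos_of_ne_zero hh), Nat.sub_zero, natToBits_zero_right, if_pos ⟨rfl, hi⟩]

theorem node_zero_succ (hh : h ≠ 0) :
    node h m j (i + 1) 0 0 = node h m j i 0 (2 ^ h - 1) := by
  rw [← tree_replicate_true_eq_node hh i.succ_ne_zero, node_eq_ite (Nat.pos_of_ne_zero hh),
    Nat.sub_zero, natToBits_two_pow_sub_one, if_neg fun hp => replicate_true_ne_false hh hp.1]

theorem exists_tree_eq_node (hp : p ≠ []) (hv : Valid h d m (.tree j (i + 1) p)) :
    ∃ r c, r < h ∧ (c + 1) * 2 ^ r ≤ 2 ^ h ∧ .tree j (i + 1) p = node h m j i r c := by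
  obtain ⟨-, -, -, -, hlen, -, hfalse⟩ := hv
  obtain ⟨c, hc, hcp⟩ := exists_natToBits_eq p
  have hpos := List.length_pos_iff.mpr hp
  refine ⟨h - p.length, c, by omega, ?_, ?_⟩
  · calc (c + 1) * 2 ^ (h - p.length) ≤ 2 ^ p.length * 2 ^ (h - p.length) :=
        Nat.mul_le_mul_right _ hc
      _ = 2 ^ h := by rw [← pow_add, Nat.add_sub_cancel' hlen]
  · rw [node_eq_ite (by omega), Nat.sub_sub_self hlen, hcp, if_neg]
    rintro ⟨hp', hi⟩
    exact hi (by simpa using hfalse hp' hp)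

theorem ne_nil_of_mem_segment {a b : ℕ} (hw : .tree j i p ∈ segment h d m k a b) : p ≠ [] := by
  rintro rfl
  obtain ⟨-, ⟨-, -, -, -, -, hroot, -⟩, hne⟩ := hw
  obtain ⟨rfl, rfl⟩ := hroot rfl
  exact hne rfl

theorem tree_mem_region (hh : h ≠ 0) (hw : .tree (j + 1) k p ∈ segment h d m (j + 1) i (i + 1)) :
    .tree (j + 1) k p ∈ region h d m j i 0 (2 ^ h) := by
  have hp := ne_nil_of_mem_segment hw
  obtain ⟨⟨-, hlo, hhi⟩, hv, -⟩ := hw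
  have hk : 1 ≤ k := hv.2.2.1
  have cancel := @le_of_mul_width_le h d (j + 1)
  simp only [leftEnd, rightEnd] at hlo hhi
  by_cases hleaf : p = List.replicate h true ∧ k = i
  · obtain ⟨rfl, rfl⟩ := hleaf
    rw [tree_replicate_true_eq_node hh (by omega)]
    exact leaf_mem_region hh le_rfl (by positivity)
  · have hki : k = i + 1 := by
      have hfalse := hv.2.2.2.2.2.2
      grind
    subst hki
    obtain ⟨r, c, hr, hc, heq⟩ := exists_tree_eq_node hp hv
    exact heq ▸ node_mem_region hr (Nat.zero_le _) hc

theorem spine_mem_region {κ t e s : ℕ}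
    (hw : .spine (j + 1) k κ t e s ∈ segment h d m (j + 1) i (i + 1)) :
    .spine (j + 1) k κ t e s ∈ region h d m j i 0 (2 ^ h) := by
  obtain ⟨⟨-, hlo, hhi⟩, ⟨-, -, hk, -, hκ, hκ', hκt, ht, ht', -⟩, -⟩ := hw
  have hlo := le_of_mul_width_le hlo
  have hhi := le_of_mul_width_le hhi
  obtain rfl : k = i + 1 := by omega
  rw [pow_succ'] at ht'
  refine .inr (.inr ⟨κ - 1, t - 1, ⟨by omega, by omega, by omega, by omega, by omega⟩, e, s, ?_⟩)
  rw [Nat.sub_add_cancel hκ, Nat.sub_add_cancel ht]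

theorem segment_subset_region (hh : h ≠ 0) (hj : 1 ≤ j) :
    segment h d m (j + 1) i (i + 1) ⊆ region h d m j i 0 (2 ^ h) := by
  intro w hw
  obtain hl | hl := hw.1.1.lt_or_eq
  · have hw' := mem_segment_of_mem_segment_succ hj (Nat.le_of_lt_succ hl) hw
    have := NN_add_one h
    exact .inl (segment_mono (by omega) (by rw [add_mul]; omega) hw')
  · cases w with
    | path => exact absurd hl (by simp only [level]; omega)
    | tree =>
      obtain rfl := hl
      exact tree_mem_region hh hw
    | spine =>
      obtain rfl := hl
      exact spine_mem_region hw

theorem tree_eq_leaf_of_mem_segment_self (hh : h ≠ 0)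
    (hw : .tree j k p ∈ segment h d m j i i) : .tree j k p = node h m j i 0 0 := by
  have hp := ne_nil_of_mem_segment hw
  obtain ⟨⟨-, hlo, hhi⟩, ⟨-, -, hk, -, -, -, hfalse⟩, -⟩ := hw
  have hcases : p = List.replicate h true ∧ k = i ∨ p = List.replicate h false ∧ k = 1 ∧ i = 0 := by
    have cancel := @le_of_mul_width_le h d j
    have := replicate_true_ne_false hh
    simp only [leftEnd, rightEnd] at hlo hhi
    grind
  obtain ⟨rfl, rfl⟩ | ⟨rfl, rfl, rfl⟩ := hcases
  · exact tree_replicate_true_eq_node hh (by omega)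
  · simp [node_eq_ite (Nat.pos_of_ne_zero hh), natToBits_zero_right]

theorem eq_leaf_of_mem_segment_self (hh : h ≠ 0) (hj : 1 ≤ j) (hl : level w = j + 1)
    (hw : w ∈ segment h d m (j + 1) i i) : w = node h m (j + 1) i 0 0 := by
  cases w with
  | path => exact absurd hl (by simp only [level]; omega)
  | tree =>
    obtain rfl := hl
    exact tree_eq_leaf_of_mem_segment_self hh hw
  | spine j' k κ t e s =>
    obtain rfl : j' = j + 1 := hl
    have hlo := le_of_mul_width_le hw.1.2.1
    have hhi := le_of_mul_width_le hw.1.2.2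
    have hk := hw.2.1.2.2.1
    omega

theorem segment_self_subset (hh : h ≠ 0) (hj : 1 ≤ j) : segment h d m (j + 1) i i ⊆
    insert (node h m (j + 1) i 0 0) (segment h d m j (i * NN h) (i * NN h)) := by
  intro w hw
  obtain hl | hl := hw.1.1.lt_or_eq
  · exact .inr (mem_segment_of_mem_segment_succ hj (Nat.le_of_lt_succ hl) hw)
  · exact .inl (eq_leaf_of_mem_segment_self hh hj hl hw)

theorem subsingleton_segment_one : (segment h d m 1 i i).Subsingleton := by
  have eq_path {w : Raw} (hw : w ∈ segment h d m 1 i i) : w = .path (i * width h d 1) := by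
    obtain ⟨⟨hl, hlo, hhi⟩, hv, -⟩ := hw
    cases w with
    | path k => exact congrArg _ (le_antisymm hhi hlo)
    | tree => exact absurd (hv.1.trans hl) (by decide)
    | spine => exact absurd (hv.1.trans hl) (by decide)
  intro u hu v hv
  rw [eq_path hu, eq_path hv]

theorem copiesNotDoublyCrossed_one : CopiesNotDoublyCrossed h d m 1 :=
  fun _ _ => .of_subsingleton subsingleton_segment_one

theorem CopiesNotDoublyCrossed.succ (hh : h ≠ 0) (hj : 1 ≤ j) (hjm : j + 1 ≤ m)
    (hcross : CopiesNotDoublyCrossed h d m j) : CopiesNotDoublyCrossed h d m (j + 1) := by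
  intro i hi
  have hguard := nodeGuards hh hj hjm hi hcross le_rfl (a := 0) (by omega)
  have hN : 2 * 2 ^ h - 1 = NN h := by have := NN_add_one h; omega
  unfold NodeGuards at hguard
  rw [zero_mul, zero_add, one_mul, node_self, mul_zero, add_zero, hN,
    ← add_one_mul, ← node_zero_succ hh] at hguard
  exact (hguard.1.notDoublyCrossed_of_notMem RootR_notMem_region).anti
    (segment_subset_region hh hj) (segment_self_subset hh hj) (segment_self_subset hh hj)

theorem copiesNotDoublyCrossed (hh : h ≠ 0) (hj : 1 ≤ j) (hjm : j ≤ m) :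
    CopiesNotDoublyCrossed h d m j := by
  induction j, hj using Nat.le_induction with
  | base => exact copiesNotDoublyCrossed_one
  | succ j hj ih => exact (ih (by omega)).succ hh hj hjm

end Copies

section Top

variable {h d m : ℕ} {w : Raw}

theorem mem_segment_top (hm : 2 ≤ m) (hv : Valid h d m w) (hw : w ≠ RootR m) :
    w ∈ segment h d m m 0 1 := by
  have width_le {j i : ℕ} (hj : 2 ≤ j) (hjm : j ≤ m) (hi : i ≤ NN h ^ (m - j)) :
      i * width h d j ≤ 1 * width h d m := by
    rw [one_mul, width_eq_pow_mul (by omega) hjm]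
    exact Nat.mul_le_mul_right _ hi
  refine ⟨⟨?_, by simp, ?_⟩, hv, hw⟩
  · cases w with
    | path => exact one_le_two.trans hm
    | tree => exact hv.2.1
    | spine => exact hv.2.1
  · cases w with
    | path k =>
      rw [one_mul, width, mul_comm]
      exact hv
    | tree j i p =>
      refine le_trans ?_ (width_le hv.1 hv.2.1 hv.2.2.2.1)
      have := Nat.mul_le_mul_right (width h d j) (Nat.sub_le i 1)
      grind [rightEnd]
    | spine j i k t e s => exact width_le hv.1 hv.2.1 hv.2.2.2.1

theorem mem_segment_of_mem_VsetRaw (hh : h ≠ 0) (hm : 2 ≤ m) {g i : ℕ} (hg : g - 1 = i * NN h)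
    (hv : Valid h d m w) (hw : w ∈ VsetRaw h d m (m - 1) g) : w ∈ segment h d m m i i := by
  obtain ⟨e, he, hem, rfl⟩ := hw
  obtain ⟨hcell, hroot⟩ := canon_VsetElem_mem_segment hh he hem hv
  rw [hg] at hcell
  have hsub := cell_subset_cell_succ (by omega) hcell
  rw [Nat.sub_add_cancel (by omega)] at hsub
  exact ⟨hsub, hroot⟩

theorem mem_segment_of_mem_SsetR (hh : h ≠ 0) (hm : 2 ≤ m) (hv : Valid h d m w)
    (hw : w ∈ SsetR h d m) : w ∈ segment h d m m 0 0 := by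
  obtain hw | rfl := hw
  · exact mem_segment_of_mem_VsetRaw hh hm (by simp) hv hw
  · have hleaf : canon h m (.tree m 1 (leafPos h 1)) = .tree m 1 (List.replicate h false) := by
      simp [leafPos, natToBits_zero_right, canon, hh]
    rw [hleaf] at hv ⊢
    exact ⟨by simp [cell, level, leftEnd, rightEnd], hv, by simp [RootR, hh]⟩

theorem mem_segment_of_mem_TsetR (hh : h ≠ 0) (hm : 2 ≤ m) (hv : Valid h d m w)
    (hw : w ∈ TsetR h d m) : w ∈ segment h d m m 1 1 := by
  obtain hw | rfl := hw
  · exact mem_segment_of_mem_VsetRaw hh hm (one_mul _).symm hv hw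
  · have hne := replicate_true_ne_false hh
    have hleaf : canon h m (.tree m 1 (leafPos h (2 ^ h))) = .tree m 1 (List.replicate h true) := by
      simp [leafPos, natToBits_two_pow_sub_one, canon, hh]
    rw [hleaf] at hv ⊢
    exact ⟨by simp [cell, level, leftEnd, rightEnd, hne], hv, by simp [RootR, hh]⟩

theorem eq_of_mem_SsetR_zero (hw : w ∈ SsetR 0 d m) (hroot : w ≠ RootR m) : w = .path 0 := by
  obtain ⟨e, -, -, rfl⟩ | rfl := hw
  · by_cases he : e = 1
    · simp [VsetElem, he, canon]
    · exact (hroot (by simp [VsetElem, he, canon, RootR])).elim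
  · exact (hroot (by simp [leafPos, natToBits, canon, RootR])).elim

theorem joins_walkSupp (hh : h ≠ 0) (hm : 2 ≤ m) {s t : Verts h d m} (hs : s.1 ∈ SsetR h d m)
    (ht : t.1 ∈ TsetR h d m) (P : (G h d m).Walk s t) :
    Joins (codeGraph h d m) (Subtype.val '' walkSupp P) (segment h d m m 0 0)
      (segment h d m m 1 1) :=
  ⟨s, mem_segment_of_mem_SsetR hh hm s.2 hs, t, mem_segment_of_mem_TsetR hh hm t.2 ht,
    ConnectedIn.map (.subtype _) ⟨P, fun _ hv => hv⟩⟩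

theorem walkSupp_subset_segment (hm : 2 ≤ m) {s t : Verts h d m} (P : (G h d m).Walk s t)
    (hP : ∀ v ∈ P.support, v.1 ≠ RootR m) :
    Subtype.val '' walkSupp P ⊆ segment h d m m 0 1 := by
  rintro _ ⟨v, hv, rfl⟩
  exact mem_segment_top hm v.2 (hP v hv)

end Top

end Ghdm

open CGT Ghdm in
theorem statement8_general (h d m : ℕ) (hm : 2 ≤ m) (s t s' t' : Verts h d m)
    (hs : s.1 ∈ SsetR h d m) (ht : t.1 ∈ TsetR h d m)
    (hs' : s'.1 ∈ SsetR h d m) (ht' : t'.1 ∈ TsetR h d m)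
    (P : (G h d m).Walk s t) (Q : (G h d m).Walk s' t') :
    (∃ v ∈ P.support, v.1 = RootR m) ∨ (∃ v ∈ Q.support, v.1 = RootR m) ∨
      sDist (G h d m) (walkSupp P) (walkSupp Q) ≤ 2 := by
  by_contra! hcon
  obtain ⟨hP, hQ, hdist⟩ := hcon
  have hremote := remote_of_two_lt_sDist hdist
  obtain rfl | hh := eq_or_ne h 0
  · have hss' : s = s' := Subtype.ext <|
      (eq_of_mem_SsetR_zero hs (hP s P.start_mem_support)).trans
        (eq_of_mem_SsetR_zero hs' (hQ s' Q.start_mem_support)).symm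
    exact (hremote s P.start_mem_support s' Q.start_mem_support).1 hss'
  · exact copiesNotDoublyCrossed hh (one_le_two.trans hm) le_rfl 0 (pow_pos (NN_pos h) _)
      _ (walkSupp_subset_segment hm P hP) _ (walkSupp_subset_segment hm Q hQ)
      (hremote.map (.subtype _)) (joins_walkSupp hh hm hs ht P) (joins_walkSupp hh hm hs' ht' Q)

/-- if `P, Q` are paths of `G_{h,d,m}` (with `d, m ≥ 2`) between `S(G)` and
`T(G)`, then one of them contains the root `R(G)`, or they come within distance 2. -/
theorem statement8 (h d m : ℕ) (hd : 2 ≤ d) (hm : 2 ≤ m)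
    (s t s' t' : Ghdm.Verts h d m)
    (hs : s.1 ∈ Ghdm.SsetR h d m) (ht : t.1 ∈ Ghdm.TsetR h d m)
    (hs' : s'.1 ∈ Ghdm.SsetR h d m) (ht' : t'.1 ∈ Ghdm.TsetR h d m)
    (P : (Ghdm.G h d m).Walk s t) (hP : P.IsPath)
    (Q : (Ghdm.G h d m).Walk s' t') (hQ : Q.IsPath) :
    (∃ v ∈ P.support, v.1 = Ghdm.RootR m) ∨ (∃ v ∈ Q.support, v.1 = Ghdm.RootR m) ∨
      CGT.sDist (Ghdm.G h d m) (CGT.walkSupp P) (CGT.walkSupp Q) ≤ 2 :=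
  statement8_general h d m hm s t s' t' hs ht hs' ht' P Q
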